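/- Let Γ ⊂ ℂ be a quasismooth Jordan curve. There exist α = α(Γ) ≥ 1 and c = c(Γ) > 0 such that for all 0 < v < u ≤ 1 and all z ∈ Γ, (1/c)(u/v)^{1/α} ≤ ρ_u(z)/ρ_v(z) ≤ c (u/v)^{α}. -/

import Mathlib

open MeasureTheory Metric Set Filter Bornology Complex
open scoped ENNReal NNReal Topology

noncomputable section

/-- `Γ` is a Jordan curve: the image of an injective continuous map of the unit circle. -/
def IsJordanCurve (Γ : Set ℂ) : Prop :=
  ∃ γ : ℂ → ℂ, ContinuousOn γ (Metric.sphere (0:ℂ) 1) ∧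
    Set.InjOn γ (Metric.sphere (0:ℂ) 1) ∧ Γ = γ '' (Metric.sphere (0:ℂ) 1)

/-- A (closed) subarc of `Γ`: a closed connected subset. -/
def IsSubarc (Γ J : Set ℂ) : Prop :=
  J ⊆ Γ ∧ IsClosed J ∧ IsPreconnected J

/-- `|Γ(z₁,z₂)|`: the length (1-dimensional Hausdorff measure) of the shorter subarc of `Γ`
joining `z₁` and `z₂`, described as the infimum of lengths of closed connected subsets of `Γ`
containing both points. -/
def shorterArcLength (Γ : Set ℂ) (z₁ z₂ : ℂ) : ℝ≥0∞ :=
  ⨅ (J : Set ℂ) (_ : IsSubarc Γ J ∧ z₁ ∈ J ∧ z₂ ∈ J), μH[1] J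

/-- `J` is (a realization of) the shorter arc `Γ(z₁,z₂)` of `Γ` between `z₁` and `z₂`. -/
def IsShorterArc (Γ : Set ℂ) (z₁ z₂ : ℂ) (J : Set ℂ) : Prop :=
  IsSubarc Γ J ∧ z₁ ∈ J ∧ z₂ ∈ J ∧ μH[1] J = shorterArcLength Γ z₁ z₂

/-- `Γ` is quasismooth (in the sense of Lavrentiev) with constant `Λ ≥ 1`:
`|Γ(z₁,z₂)| ≤ Λ |z₁ - z₂|`. -/
def IsQuasismooth (Γ : Set ℂ) (Λ : ℝ) : Prop :=
  1 ≤ Λ ∧ ∀ z₁ ∈ Γ, ∀ z₂ ∈ Γ,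
    shorterArcLength Γ z₁ z₂ ≤ ENNReal.ofReal (Λ * dist z₁ z₂)

/-- The union of the unbounded connected components of `Γᶜ`; for a Jordan curve `Γ` this is
the (unique) unbounded component `Ω` of the complement of `Γ`. -/
def unboundedComponent (Γ : Set ℂ) : Set ℂ :=
  {z | z ∉ Γ ∧ ¬ Bornology.IsBounded (connectedComponentIn Γᶜ z)}

/-- `d(A,B) := inf {|z-ζ| : z ∈ A, ζ ∈ B}`. -/
def setDist (A B : Set ℂ) : ℝ := sInf (Set.image2 dist A B)

/-- The exterior `𝔻*` of the closed unit disk (finite part). -/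
def extDisk : Set ℂ := {w : ℂ | 1 < ‖w‖}

/-- `Φ` is the conformal (holomorphic bijective) map of `Ω` onto `𝔻* = {|w| > 1}` normalized
by `Φ(∞) = ∞` and `Φ'(∞) := lim_{z→∞} Φ(z)/z > 0`. -/
def IsExtConformal (Ω : Set ℂ) (Φ : ℂ → ℂ) : Prop :=
  DifferentiableOn ℂ Φ Ω ∧ Set.BijOn Φ Ω extDisk ∧
    ∃ c : ℝ, 0 < c ∧
      Filter.Tendsto (fun z => Φ z / z) (Bornology.cobounded ℂ) (nhds (c : ℂ))

/-- `Φ` additionally extends to a homeomorphism of `closure Ω` onto `{|w| ≥ 1}`. -/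
def IsExtConformalClosure (Ω : Set ℂ) (Φ : ℂ → ℂ) : Prop :=
  IsExtConformal Ω Φ ∧ ContinuousOn Φ (closure Ω) ∧
    Set.BijOn Φ (closure Ω) {w : ℂ | 1 ≤ ‖w‖}

/-- The level curve `Γ_δ := {ζ ∈ Ω : |Φ(ζ)| = 1 + δ}`. -/
def levelCurve (Ω : Set ℂ) (Φ : ℂ → ℂ) (δ : ℝ) : Set ℂ :=
  {ζ ∈ Ω | ‖Φ ζ‖ = 1 + δ}

/-- `ρ_δ(z) := d({z}, Γ_δ)`. -/
def rho (Ω : Set ℂ) (Φ : ℂ → ℂ) (δ : ℝ) (z : ℂ) : ℝ :=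
  Metric.infDist z (levelCurve Ω Φ δ)

/-- `ν ∈ A∞(Γ)` with constant `lam ≥ 1`: `ν(J) ≤ lam · ν(S)` for every subarc `J ⊂ Γ` and
every Borel set `S ⊂ J` with `|J| ≤ 2|S|`. -/
def IsAInftyMeasure (Γ : Set ℂ) (ν : MeasureTheory.Measure ℂ) (lam : ℝ) : Prop :=
  1 ≤ lam ∧ ∀ J S : Set ℂ, IsSubarc Γ J → S ⊆ J → MeasurableSet S →
    μH[1] J ≤ 2 * μH[1] S → ν J ≤ ENNReal.ofReal lam * ν S

/-!
Let `F` be the inverse of `Φ`.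

Upper bound: `F` omits the points of `Γ`, so Koebe distortion gives
`‖F' w‖ * (‖w‖ - 1) ≤ C * ‖F w - z‖` for `z ∈ Γ`. Integrating along a ray shows that `‖F w - z‖`
grows at most by a factor `(u / v) ^ C` between the levels `1 + v` and `1 + u`.

Lower bound: `Γ` has bounded turning, so by Eilenberg's logarithm criterion any two points of `Ω` in
a disc centred on `Γ` are joined in `Ω` inside a larger disc, and any two points outside a disc are
joined in `Ω` outside a smaller one. If `ρ_u(z) < 2 ρ_v(z)`, it follows that, for a suitable `a` of
modulus one, each circle `‖w - a‖ = t` with `v < t < u` contains an arc of `extDisk` whose image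
under `F` starts at distance `O(ρ_v(z))` from `z` and has diameter comparable to `ρ_v(z)`. By the
length-area method `log (u / v)` is then at most a constant `N`. Thus `ρ_δ(z)` at least doubles
whenever `δ` is multiplied by `exp N`, and iterating gives the power of `u / v`.
-/

section ContinuousLogarithm

variable {X Y : Type*} [TopologicalSpace X] [TopologicalSpace Y] {f g : X → ℂ} {S T : Set X}

/-- `f` has a continuous logarithm on `S`. In particular `f` does not vanish on `S`. -/
def HasLogOn (f : X → ℂ) (S : Set X) : Prop :=
  ∃ L : X → ℂ, ContinuousOn L S ∧ ∀ x ∈ S, exp (L x) = f x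

lemma sub_eq_sub_of_exp_eq {L M : X → ℂ} (hS : IsPreconnected S) (hL : ContinuousOn L S)
    (hM : ContinuousOn M S) (h : ∀ x ∈ S, exp (L x) = exp (M x)) {x y : X} (hx : x ∈ S)
    (hy : y ∈ S) : L x - M x = L y - M y := by
  have hone : ∀ z ∈ S, exp (L z - M z) = 1 := fun z hz => by
    rw [exp_sub, h z hz, div_self (exp_ne_zero _)]
  exact isCoveringMap_exp.constOn_of_comp hS (hL.sub hM)
    (fun a ha b hb => Subtype.ext ((hone a ha).trans (hone b hb).symm)) hx hy

lemma hasLogOn_univ [SimplyConnectedSpace X] [LocallyPathConnectedSpace X] (hf : Continuous f)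
    (h0 : ∀ x, f x ≠ 0) : HasLogOn f univ := by
  obtain ⟨x₀⟩ := (inferInstance : Nonempty X)
  obtain ⟨G, -, hG⟩ := (isCoveringMapOn_exp.existsUnique_continuousMap_lifts ⟨f, hf⟩
    (exp_log (h0 x₀)) h0).exists
  exact ⟨G, G.continuous.continuousOn, fun x _ => congrFun hG x⟩

lemma hasLogOn_Icc {f : ℝ → ℂ} {s t : ℝ} (hst : s ≤ t) (hf : ContinuousOn f (Icc s t))
    (h0 : ∀ r ∈ Icc s t, f r ≠ 0) : HasLogOn f (Icc s t) := by
  obtain ⟨G, hG, hGe⟩ := hasLogOn_univ (f := IccExtend hst ((Icc s t).domRestrict f))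
    hf.domRestrict.Icc_extend' fun r => h0 _ (projIcc s t hst r).2
  exact ⟨G, hG.mono (subset_univ _), fun r hr => by
    rw [hGe r (mem_univ r), IccExtend_of_mem hst _ hr, domRestrict_apply]⟩

lemma hasLogOn_of_mem_slitPlane (hf : ContinuousOn f S) (h : ∀ x ∈ S, f x ∈ slitPlane) :
    HasLogOn f S :=
  ⟨fun x => log (f x), hf.clog h, fun x hx => exp_log (slitPlane_ne_zero (h x hx))⟩

lemma hasLogOn_one_sub (hf : ContinuousOn f S) (h : ∀ x ∈ S, ‖f x‖ < 1) :
    HasLogOn (fun x => 1 - f x) S := by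
  refine hasLogOn_of_mem_slitPlane (continuousOn_const.sub hf) fun x hx => ?_
  rw [sub_eq_add_neg]
  exact mem_slitPlane_of_norm_lt_one (by rw [norm_neg]; exact h x hx)

namespace HasLogOn

lemma ne_zero (hf : HasLogOn f S) {x : X} (hx : x ∈ S) : f x ≠ 0 := by
  obtain ⟨L, -, hLe⟩ := hf
  exact hLe x hx ▸ exp_ne_zero _

lemma congr (hf : HasLogOn f S) (h : ∀ x ∈ S, f x = g x) : HasLogOn g S := by
  obtain ⟨L, hL, hLe⟩ := hf
  exact ⟨L, hL, fun x hx => (hLe x hx).trans (h x hx)⟩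

lemma mul (hf : HasLogOn f S) (hg : HasLogOn g S) : HasLogOn (fun x => f x * g x) S := by
  obtain ⟨L, hL, hLe⟩ := hf
  obtain ⟨M, hM, hMe⟩ := hg
  exact ⟨fun x => L x + M x, hL.add hM, fun x hx => by rw [exp_add, hLe x hx, hMe x hx]⟩

lemma inv (hf : HasLogOn f S) : HasLogOn (fun x => (f x)⁻¹) S := by
  obtain ⟨L, hL, hLe⟩ := hf
  exact ⟨fun x => -L x, hL.neg, fun x hx => by rw [exp_neg, hLe x hx]⟩

lemma div (hf : HasLogOn f S) (hg : HasLogOn g S) : HasLogOn (fun x => f x / g x) S :=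
  (hf.mul hg.inv).congr fun _ _ => (div_eq_mul_inv _ _).symm

lemma image [T2Space Y] {f : Y → ℂ} {γ : X → Y} (h : HasLogOn (f ∘ γ) S) (hS : IsCompact S)
    (hγ : ContinuousOn γ S) (hinj : InjOn γ S) : HasLogOn f (γ '' S) := by
  rcases S.eq_empty_or_nonempty with rfl | ⟨x₀, -⟩
  · exact ⟨0, by simp, by simp⟩
  obtain ⟨L, hL, hLe⟩ := h
  have : Nonempty X := ⟨x₀⟩
  have hleft := hinj.leftInvOn_invFunOn
  have hinv : ContinuousOn (Function.invFunOn γ S) (γ '' S) := by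
    refine continuousOn_iff_isClosed.2 fun T hT => ⟨γ '' (T ∩ S), ?_, ?_⟩
    · exact ((hS.inter_left hT).image_of_continuousOn (hγ.mono inter_subset_right)).isClosed
    · rw [hleft.image_inter', inter_assoc, inter_self]
  refine ⟨L ∘ Function.invFunOn γ S, hL.comp hinv ?_, ?_⟩
  · rintro _ ⟨x, hx, rfl⟩
    rwa [hleft hx]
  · rintro _ ⟨x, hx, rfl⟩
    rw [Function.comp_apply, hleft hx, hLe x hx, Function.comp_apply]

-- Two logarithms of `f` differ by a constant along each connected set, so they can be glued.
lemma union (hfS : HasLogOn f S) {T' : Set X} (hfT : HasLogOn f T') (hS : IsClosed S)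
    (hT : IsClosed T) (hTT' : T ⊆ T')
    (h : ∀ p ∈ S ∩ T, ∀ q ∈ S ∩ T, ∃ C ⊆ S ∩ T', IsPreconnected C ∧ p ∈ C ∧ q ∈ C) :
    HasLogOn f (S ∪ T) := by
  classical
  obtain ⟨L, hL, hLe⟩ := hfS
  obtain ⟨M, hM, hMe⟩ := hfT
  obtain ⟨c, hc, hcST⟩ : ∃ c : ℂ, exp c = 1 ∧ ∀ p ∈ S ∩ T, L p = M p + c := by
    rcases (S ∩ T).eq_empty_or_nonempty with hempty | ⟨q, hq⟩
    · exact ⟨0, exp_zero, by simp [hempty]⟩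
    refine ⟨L q - M q, ?_, fun p hp => ?_⟩
    · rw [exp_sub, hLe q hq.1, ← hMe q (hTT' hq.2), div_self (exp_ne_zero _)]
    · obtain ⟨C, hCsub, hC, hpC, hqC⟩ := h p hp q hq
      rw [← sub_eq_sub_of_exp_eq hC (hL.mono fun x hx => (hCsub hx).1)
        (hM.mono fun x hx => (hCsub hx).2)
        (fun x hx => (hLe x (hCsub hx).1).trans (hMe x (hCsub hx).2).symm) hpC hqC]
      ring
  have hglue : ∀ x ∈ T, S.piecewise L (fun x => M x + c) x = M x + c := fun x hx => by
    by_cases hxS : x ∈ S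
    · rw [piecewise_eq_of_mem _ _ _ hxS, hcST x ⟨hxS, hx⟩]
    · rw [piecewise_eq_of_notMem _ _ _ hxS]
  refine ⟨S.piecewise L fun x => M x + c, ?_, ?_⟩
  · exact (hL.congr (piecewise_eqOn _ _ _)).union_of_isClosed
      (((hM.mono hTT').add continuousOn_const).congr hglue) hS hT
  · rintro x (hx | hx)
    · rw [piecewise_eq_of_mem _ _ _ hx, hLe x hx]
    · rw [hglue x hx, exp_add, hc, mul_one, hMe x (hTT' hx)]

end HasLogOn

end ContinuousLogarithm

section Separation

variable {X : Set ℂ} {a b : ℂ}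

lemma exists_eq_zero_of_eqOn_sphere {F : ℂ → ℂ} (hF : Continuous F) {R : ℝ} (hR : 0 < R)
    (h : EqOn F (· - a) (sphere a R)) : ∃ z, F z = 0 := by
  by_contra! h0
  obtain ⟨G, hG, hGF⟩ := hasLogOn_univ hF h0
  rw [continuousOn_univ] at hG
  have hexp : ∀ θ : ℝ, exp (G (a + R * exp (θ * I))) = exp (Real.log R + θ * I) := fun θ => by
    have hmem : a + R * exp (θ * I) ∈ sphere a R := by
      simp [norm_exp_ofReal_mul_I, abs_of_pos hR]
    rw [hGF _ (mem_univ _), h hmem, exp_add, ← ofReal_exp, Real.exp_log hR]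
    exact add_sub_cancel_left _ _
  have hwind := sub_eq_sub_of_exp_eq (X := ℝ) isPreconnected_univ (by fun_prop) (by fun_prop)
    (fun θ _ => hexp θ) (mem_univ (2 * Real.pi)) (mem_univ 0)
  simp [exp_two_pi_mul_I, Real.pi_ne_zero] at hwind

lemma not_hasLogOn_of_isBounded {U : Set ℂ} (hX : IsClosed X) (hU : IsBounded U)
    (hUX : frontier U ⊆ X) (ha : a ∈ U) (hb : b ∉ U) :
    ¬ HasLogOn (fun z => (z - a) / (z - b)) X := by
  rintro h
  have hbX : ∀ z ∈ X, z - b ≠ 0 := fun z hz => (div_ne_zero_iff.1 (h.ne_zero hz)).2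
  obtain ⟨L, hL, hLe⟩ := h
  obtain ⟨g, hg⟩ := ContinuousMap.exists_restrict_eq hX ⟨X.domRestrict L, hL.domRestrict⟩
  have hgL : EqOn g L X := fun z hz => DFunLike.congr_fun hg ⟨z, hz⟩
  classical
  let F : ℂ → ℂ := U.piecewise (fun z => exp (g z) * (z - b)) (· - a)
  have hF : Continuous F := by
    refine continuous_piecewise (fun z hz => ?_) (by fun_prop) (by fun_prop)
    rw [hgL (hUX hz), hLe z (hUX hz), div_mul_cancel₀ _ (hbX z (hUX hz))]
  obtain ⟨R, hR⟩ := hU.subset_ball a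
  have hFR : EqOn F (· - a) (sphere a R) := fun z hz =>
    piecewise_eq_of_notMem _ _ _ fun hzU => (mem_ball.1 (hR hzU)).ne hz
  obtain ⟨z, hz⟩ := exists_eq_zero_of_eqOn_sphere hF (by simpa using hR ha) hFR
  by_cases hzU : z ∈ U
  · rw [show F z = _ from piecewise_eq_of_mem _ _ _ hzU] at hz
    exact hb (sub_eq_zero.1 ((mul_eq_zero.1 hz).resolve_left (exp_ne_zero _)) ▸ hzU)
  · rw [show F z = _ from piecewise_eq_of_notMem _ _ _ hzU] at hz
    exact hzU (sub_eq_zero.1 hz ▸ ha)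

lemma frontier_connectedComponentIn_compl_subset {α : Type*} [TopologicalSpace α]
    [LocallyConnectedSpace α] {X : Set α} (hX : IsClosed X) (a : α) :
    frontier (connectedComponentIn Xᶜ a) ⊆ X := by
  intro z hz
  by_contra hzX
  have hzmem := mem_connectedComponentIn (F := Xᶜ) hzX
  rw [hX.isOpen_compl.connectedComponentIn.frontier_eq] at hz
  obtain ⟨w, hwz, hwa⟩ := mem_closure_iff.1 hz.1 _ hX.isOpen_compl.connectedComponentIn hzmem
  refine hz.2 ?_
  rwa [connectedComponentIn_eq hwa, ← connectedComponentIn_eq hwz]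

lemma isPreconnected_setOf_lt_dist {E : Type*} [NormedAddCommGroup E] [NormedSpace ℝ E]
    (hE : 1 < Module.rank ℝ E) (c : E) (R : ℝ) : IsPreconnected {x : E | R < dist x c} := by
  rcases lt_or_ge R 0 with hR | hR
  · rw [show {x : E | R < dist x c} = univ from
      eq_univ_of_forall fun x => hR.trans_le dist_nonneg]
    exact isPreconnected_univ
  have himage : {x : E | R < dist x c} =
      (fun p : ℝ × E => c + p.1 • p.2) '' (Ioi R ×ˢ sphere 0 1) := by
    refine Subset.antisymm (fun x hx => ?_) ?_
    · have hx : R < ‖x - c‖ := by rwa [← dist_eq_norm]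
      have hx0 : ‖x - c‖ ≠ 0 := (hR.trans_lt hx).ne'
      exact ⟨(‖x - c‖, ‖x - c‖⁻¹ • (x - c)), ⟨hx, by simp [norm_smul, hx0]⟩, by
        simp [smul_inv_smul₀ hx0]⟩
    · rintro _ ⟨⟨r, x⟩, ⟨hr, hx⟩, rfl⟩
      have hr : R < r := hr
      simpa [norm_smul, mem_sphere_zero_iff_norm.1 hx, abs_of_pos (hR.trans_lt hr)] using hr
  rw [himage]
  exact (isPreconnected_Ioi.prod (isPreconnected_sphere hE 0 1)).image _ (by fun_prop)

lemma isPreconnected_compl_closedBall {E : Type*} [NormedAddCommGroup E] [NormedSpace ℝ E]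
    (hE : 1 < Module.rank ℝ E) (c : E) (R : ℝ) : IsPreconnected (closedBall c R)ᶜ := by
  simpa only [closedBall, compl_ofPred, not_le] using isPreconnected_setOf_lt_dist hE c R

lemma mem_connectedComponentIn_compl_of_not_isBounded {E : Type*} [NormedAddCommGroup E]
    [NormedSpace ℝ E] (hE : 1 < Module.rank ℝ E) {X : Set E} (hX : IsBounded X) {a b : E}
    (ha : ¬ IsBounded (connectedComponentIn Xᶜ a))
    (hb : ¬ IsBounded (connectedComponentIn Xᶜ b)) : b ∈ connectedComponentIn Xᶜ a := by
  obtain ⟨R, hR⟩ := hX.subset_closedBall 0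
  have hmeets : ∀ p, ¬ IsBounded (connectedComponentIn Xᶜ p) →
      ∃ x ∈ connectedComponentIn Xᶜ p, x ∉ closedBall 0 R := fun p hp => by
    by_contra! hsub
    exact hp (isBounded_closedBall.subset hsub)
  obtain ⟨x, hxa, hx⟩ := hmeets a ha
  obtain ⟨y, hyb, hy⟩ := hmeets b hb
  have hyx := (isPreconnected_compl_closedBall hE 0 R).subset_connectedComponentIn hx
    (compl_subset_compl.2 hR) hy
  have hbX : b ∈ Xᶜ := connectedComponentIn_nonempty_iff.1 ⟨y, hyb⟩
  rw [connectedComponentIn_eq hxa, connectedComponentIn_eq hyx, ← connectedComponentIn_eq hyb]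
  exact mem_connectedComponentIn hbX

lemma eventually_hasLogOn_div (hX : IsClosed X) (ha : a ∉ X) :
    ∀ᶠ b in 𝓝 a, HasLogOn (fun z => (z - a) / (z - b)) X := by
  obtain ⟨ε, hε, hball⟩ := Metric.isOpen_iff.1 hX.isOpen_compl a ha
  filter_upwards [ball_mem_nhds a (half_pos hε)] with b hb
  have hbX : ∀ z ∈ X, ε / 2 < ‖z - b‖ := fun z hz => by
    have hza : ε ≤ dist z a := not_lt.1 fun h => hball h hz
    rw [← dist_eq_norm]
    linarith [dist_triangle z b a, mem_ball.1 hb]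
  have hne : ∀ z ∈ X, z - b ≠ 0 := fun z hz => norm_pos_iff.1 ((half_pos hε).trans (hbX z hz))
  refine (hasLogOn_one_sub (f := fun z => (a - b) / (z - b))
    (continuousOn_const.div (by fun_prop) hne) fun z hz => ?_).congr fun z hz => ?_
  · rw [norm_div, div_lt_one ((half_pos hε).trans (hbX z hz)), ← dist_eq_norm, dist_comm]
    exact (mem_ball.1 hb).trans (hbX z hz)
  · rw [one_sub_div (hne z hz), sub_sub_sub_cancel_right]

lemma hasLogOn_div_of_mem_connectedComponentIn (hX : IsClosed X)
    (h : b ∈ connectedComponentIn Xᶜ a) : HasLogOn (fun z => (z - a) / (z - b)) X := by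
  have hsub := connectedComponentIn_subset Xᶜ a
  have ha : a ∈ Xᶜ := connectedComponentIn_nonempty_iff.1 ⟨b, h⟩
  refine isPreconnected_connectedComponentIn.induction₂
    (fun a b => HasLogOn (fun z => (z - a) / (z - b)) X)
    (fun p hp => nhdsWithin_le_nhds (eventually_hasLogOn_div hX (hsub hp)))
    (fun p q r _ hq _ hpq hqr => (hpq.mul hqr).congr fun z hz => ?_)
    (fun p q _ _ hpq => hpq.inv.congr fun z _ => inv_div _ _)
    (mem_connectedComponentIn ha) h
  exact div_mul_div_cancel₀ (sub_ne_zero.2 fun hzq => hsub hq (hzq ▸ hz))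

/-- Eilenberg's criterion. Since `x / 0 = 0`, the existence of a logarithm includes
`a ∉ X` and `b ∉ X`. -/
theorem hasLogOn_div_iff_mem_connectedComponentIn (hX : IsCompact X) :
    HasLogOn (fun z => (z - a) / (z - b)) X ↔ b ∈ connectedComponentIn Xᶜ a := by
  refine ⟨fun h => ?_, hasLogOn_div_of_mem_connectedComponentIn hX.isClosed⟩
  have hne := fun z hz => div_ne_zero_iff.1 (h.ne_zero (x := z) hz)
  have ha : a ∈ Xᶜ := fun haX => (hne a haX).1 (sub_self a)
  have hb : b ∈ Xᶜ := fun hbX => (hne b hbX).2 (sub_self b)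
  by_contra hab
  have hba : a ∉ connectedComponentIn Xᶜ b := fun hba =>
    hab (connectedComponentIn_eq hba ▸ mem_connectedComponentIn hb)
  refine hab (mem_connectedComponentIn_compl_of_not_isBounded
    (rank_real_complex ▸ Nat.one_lt_ofNat) hX.isBounded (fun hbdd => ?_) fun hbdd => ?_)
  · exact not_hasLogOn_of_isBounded hX.isClosed hbdd
      (frontier_connectedComponentIn_compl_subset hX.isClosed a) (mem_connectedComponentIn ha)
      hab h
  · exact not_hasLogOn_of_isBounded hX.isClosed hbdd
      (frontier_connectedComponentIn_compl_subset hX.isClosed b) (mem_connectedComponentIn hb)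
      hba (h.inv.congr fun z _ => inv_div _ _)

lemma hasLogOn_div_of_dist_le {x : ℂ} {R : ℝ} (ha : dist a x ≤ R) (hb : dist b x ≤ R) :
    HasLogOn (fun z => (z - a) / (z - b)) {z | R < dist z x} := by
  have hne : ∀ z ∈ {z : ℂ | R < dist z x}, z - x ≠ 0 := fun z hz =>
    sub_ne_zero.2 (dist_pos.1 ((dist_nonneg.trans ha).trans_lt hz))
  have hfactor : ∀ p, dist p x ≤ R →
      HasLogOn (fun z => 1 - (p - x) / (z - x)) {z | R < dist z x} := fun p hp =>
    hasLogOn_one_sub (continuousOn_const.div (by fun_prop) hne) fun z hz => by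
      rw [norm_div, div_lt_one (norm_pos_iff.2 (hne z hz)), ← dist_eq_norm, ← dist_eq_norm]
      exact hp.trans_lt hz
  refine ((hfactor a ha).div (hfactor b hb)).congr fun z hz => ?_
  rw [one_sub_div (hne z hz), one_sub_div (hne z hz), div_div_div_cancel_right₀ (hne z hz),
    sub_sub_sub_cancel_right, sub_sub_sub_cancel_right]

lemma hasLogOn_div_closedBall {x : ℂ} {R : ℝ} (ha : a ∉ closedBall x R)
    (hb : b ∉ closedBall x R) : HasLogOn (fun z => (z - a) / (z - b)) (closedBall x R) :=
  hasLogOn_div_of_mem_connectedComponentIn isClosed_closedBall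
    ((isPreconnected_compl_closedBall (rank_real_complex ▸ Nat.one_lt_ofNat) x
      R).subset_connectedComponentIn ha Subset.rfl hb)

end Separation

section BoundedTurning

/-- `Γ` has bounded turning with constant `K`: any two points of `Γ` are joined by a connected
subset of `Γ` whose size is at most `K` times their distance. A Jordan curve with this property
is a quasicircle. -/
def IsBoundedTurning {X : Type*} [PseudoMetricSpace X] (Γ : Set X) (K : ℝ) : Prop :=
  ∀ z₁ ∈ Γ, ∀ z₂ ∈ Γ, ∃ J ⊆ Γ ∩ closedBall z₁ (K * dist z₁ z₂), IsPreconnected J ∧ z₁ ∈ J ∧ z₂ ∈ J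

lemma IsBoundedTurning.one_le {X : Type*} [MetricSpace X] {Γ : Set X} {K : ℝ}
    (hK : IsBoundedTurning Γ K) (hΓ : Γ.Nontrivial) : 1 ≤ K := by
  obtain ⟨z₁, h₁, z₂, h₂, hne⟩ := hΓ
  obtain ⟨J, hJ, -, -, hz₂⟩ := hK z₁ h₁ z₂ h₂
  have hle := mem_closedBall'.1 (hJ hz₂).2
  nlinarith [dist_pos.2 hne]

lemma edist_le_hausdorffMeasure {X : Type*} [MetricSpace X] [MeasurableSpace X] [BorelSpace X]
    {J : Set X} (hJ : IsPreconnected J) {z w : X} (hz : z ∈ J) (hw : w ∈ J) :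
    edist z w ≤ μH[1] J := by
  have hlip : LipschitzWith 1 (dist z) := LipschitzWith.dist_right z
  have himage : Icc 0 (dist z w) ⊆ dist z '' J :=
    (hJ.image _ hlip.continuous.continuousOn).Icc_subset ⟨z, hz, dist_self z⟩ ⟨w, hw, rfl⟩
  calc edist z w = μH[1] (Icc 0 (dist z w)) := by
        rw [hausdorffMeasure_real, Real.volume_Icc, sub_zero, edist_dist]
    _ ≤ μH[1] (dist z '' J) := measure_mono himage
    _ ≤ μH[1] J := by simpa using hlip.hausdorffMeasure_image_le zero_le_one J

lemma IsQuasismooth.isBoundedTurning {Γ : Set ℂ} {Λ : ℝ} (h : IsQuasismooth Γ Λ) :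
    IsBoundedTurning Γ (2 * Λ) := by
  intro z₁ h₁ z₂ h₂
  obtain ⟨hΛ, h⟩ := h
  rcases eq_or_ne z₁ z₂ with rfl | hne
  · exact ⟨{z₁}, by simpa using h₁, isPreconnected_singleton, rfl, rfl⟩
  have hd : 0 < dist z₁ z₂ := dist_pos.2 hne
  have hlt : shorterArcLength Γ z₁ z₂ < ENNReal.ofReal (2 * Λ * dist z₁ z₂) :=
    (h z₁ h₁ z₂ h₂).trans_lt ((ENNReal.ofReal_lt_ofReal_iff (by positivity)).2 (by nlinarith))
  simp only [shorterArcLength, iInf_lt_iff] at hlt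
  obtain ⟨J, ⟨⟨hJΓ, -, hJ⟩, hz₁, hz₂⟩, hlt⟩ := hlt
  refine ⟨J, fun w hw => ⟨hJΓ hw, mem_closedBall'.2 ?_⟩, hJ, hz₁, hz₂⟩
  exact (edist_le_ofReal (by positivity)).1 ((edist_le_hausdorffMeasure hJ hz₁ hw).trans hlt.le)

end BoundedTurning

section JordanCurve

variable {Γ : Set ℂ}

namespace IsJordanCurve

lemma isCompact (h : IsJordanCurve Γ) : IsCompact Γ := by
  obtain ⟨γ, hγ, -, rfl⟩ := h
  exact (isCompact_sphere 0 1).image_of_continuousOn hγ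

lemma nontrivial (h : IsJordanCurve Γ) : Γ.Nontrivial := by
  obtain ⟨γ, -, hγ, rfl⟩ := h
  exact (nontrivial_of_mem_mem_ne (x := 1) (y := -1) (by simp) (by simp)
    (by norm_num)).image_of_injOn hγ

lemma exists_loop (h : IsJordanCurve Γ) {p : ℂ} (hp : p ∈ Γ) :
    ∃ g : ℝ → ℂ, Continuous g ∧ g (-Real.pi) = p ∧ g Real.pi = p ∧
      InjOn g (Ioc (-Real.pi) Real.pi) ∧ g '' Icc (-Real.pi) Real.pi = Γ := by
  obtain ⟨γ, hγ, hinj, rfl⟩ := h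
  obtain ⟨w, hw, rfl⟩ := hp
  have hw : ‖w‖ = 1 := mem_sphere_zero_iff_norm.1 hw
  have hw0 : w ≠ 0 := norm_ne_zero_iff.1 (hw ▸ one_ne_zero)
  have hmem : ∀ θ : ℝ, -w * exp (θ * I) ∈ sphere (0 : ℂ) 1 := fun θ => by
    simp [norm_exp_ofReal_mul_I, hw]
  refine ⟨fun θ => γ (-w * exp (θ * I)), hγ.comp_continuous (by fun_prop) hmem, ?_, ?_, ?_, ?_⟩
  · simp [exp_neg]
  · simp
  · intro s hs t ht hst
    have hexp := mul_left_cancel₀ (neg_ne_zero.2 hw0) (hinj (hmem s) (hmem t) hst)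
    simpa using exp_inj_of_neg_pi_lt_of_le_pi (by simpa using hs.1) (by simpa using hs.2)
      (by simpa using ht.1) (by simpa using ht.2) hexp
  · refine Subset.antisymm ?_ ?_
    · rintro _ ⟨θ, -, rfl⟩
      exact mem_image_of_mem γ (hmem θ)
    · rintro _ ⟨z, hz, rfl⟩
      have hz : ‖-w⁻¹ * z‖ = 1 := by simpa [hw] using hz
      refine ⟨arg (-w⁻¹ * z), ⟨(neg_pi_lt_arg _).le, arg_le_pi _⟩, congrArg γ ?_⟩
      have harg := norm_mul_exp_arg_mul_I (-w⁻¹ * z)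
      rw [hz, ofReal_one, one_mul] at harg
      rw [harg, neg_mul, neg_mul, mul_neg, neg_neg, mul_inv_cancel_left₀ hw0]

lemma exists_two_arcs (h : IsJordanCurve Γ) {p q : ℂ} (hp : p ∈ Γ) (hq : q ∈ Γ) :
    ∃ A B : Set ℂ, IsClosed A ∧ IsClosed B ∧ IsPreconnected A ∧ IsPreconnected B ∧
      A ∪ B = Γ ∧ {p, q} ⊆ A ∧ {p, q} ⊆ B ∧ A ∩ B ⊆ {p, q} := by
  obtain ⟨g, hg, hgp, hgp', hinj, himage⟩ := h.exists_loop hp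
  obtain ⟨t, ⟨ht, ht'⟩, rfl⟩ := himage ▸ hq
  refine ⟨g '' Icc (-Real.pi) t, g '' Icc t Real.pi, (isCompact_Icc.image hg).isClosed,
    (isCompact_Icc.image hg).isClosed, isPreconnected_Icc.image _ hg.continuousOn,
    isPreconnected_Icc.image _ hg.continuousOn, ?_, ?_, ?_, ?_⟩
  · rw [← image_union, Icc_union_Icc_eq_Icc ht ht', himage]
  · exact pair_subset ⟨_, left_mem_Icc.2 ht, hgp⟩ ⟨t, right_mem_Icc.2 ht, rfl⟩
  · exact pair_subset ⟨_, right_mem_Icc.2 ht', hgp'⟩ ⟨t, left_mem_Icc.2 ht', rfl⟩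
  · rintro _ ⟨⟨r, ⟨hr, hrt⟩, rfl⟩, ⟨s, ⟨hts, hs⟩, hsr⟩⟩
    rcases hr.eq_or_lt with rfl | hr
    · exact Or.inl hgp
    have hsr : s = r := hinj ⟨hr.trans_le (hrt.trans hts), hs⟩ ⟨hr, hrt.trans ht'⟩ hsr
    exact Or.inr (congrArg g (hrt.antisymm (hsr ▸ hts)))

end IsJordanCurve

-- Otherwise each of the two arcs of `Γ` between `p` and `q` meets `closedBall x R`, and the
-- connected set joining these two close points would have to pass through `p` or `q`.
lemma IsJordanCurve.exists_isPreconnected_far {K : ℝ} (hΓ : IsJordanCurve Γ)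
    (hK : IsBoundedTurning Γ K) {p q x : ℂ} {R : ℝ} (hp : p ∈ Γ) (hq : q ∈ Γ)
    (hpR : (2 * K + 1) * R < dist p x) (hqR : (2 * K + 1) * R < dist q x) :
    ∃ C ⊆ Γ ∩ {z | R < dist z x}, IsPreconnected C ∧ p ∈ C ∧ q ∈ C := by
  obtain ⟨A, B, hA, hB, hAconn, hBconn, hAB, hpqA, hpqB, hABpq⟩ := hΓ.exists_two_arcs hp hq
  have hAΓ : A ⊆ Γ := hAB ▸ subset_union_left
  have hBΓ : B ⊆ Γ := hAB ▸ subset_union_right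
  by_cases hAfar : ∀ e ∈ A, R < dist e x
  · exact ⟨A, subset_inter hAΓ hAfar, hAconn, hpqA (by simp), hpqA (by simp)⟩
  by_cases hBfar : ∀ e ∈ B, R < dist e x
  · exact ⟨B, subset_inter hBΓ hBfar, hBconn, hpqB (by simp), hpqB (by simp)⟩
  push Not at hAfar hBfar
  obtain ⟨e₁, he₁, hd₁⟩ := hAfar
  obtain ⟨e₂, he₂, hd₂⟩ := hBfar
  obtain ⟨J, hJ, hJconn, h₁, h₂⟩ := hK e₁ (hAΓ he₁) e₂ (hBΓ he₂)
  have hJnear : ∀ w ∈ J, dist w x ≤ (2 * K + 1) * R := fun w hw => by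
    have := mem_closedBall.1 (hJ hw).2
    nlinarith [dist_triangle w e₁ x, dist_triangle_right e₁ e₂ x, hK.one_le hΓ.nontrivial]
  have hJpq : ∀ w ∈ J, w ∉ ({p, q} : Set ℂ) := by
    rintro w hw (rfl | rfl)
    exacts [(hJnear w hw).not_gt hpR, (hJnear w hw).not_gt hqR]
  rcases isPreconnected_iff_subset_of_disjoint_closed.1 hJconn A B hA hB
    (hAB ▸ fun _ hw => (hJ hw).1)
    (eq_empty_of_forall_notMem fun w hw => hJpq w hw.1 (hABpq hw.2)) with hsub | hsub
  · exact (hJpq _ h₂ (hABpq ⟨hsub h₂, he₂⟩)).elim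
  · exact (hJpq _ h₁ (hABpq ⟨he₁, hsub h₁⟩)).elim

lemma IsJordanCurve.mem_connectedComponentIn_inter_ball {K : ℝ} (hΓ : IsJordanCurve Γ)
    (hK : IsBoundedTurning Γ K) {a b x : ℂ} {R C : ℝ} (hab : b ∈ connectedComponentIn Γᶜ a)
    (ha : dist a x ≤ R) (hb : dist b x ≤ R) (hRC : (2 * K + 1) * R < C) :
    b ∈ connectedComponentIn (Γᶜ ∩ ball x C) a := by
  have hltC : R < C := by nlinarith [hK.one_le hΓ.nontrivial, dist_nonneg.trans ha]
  have hsphere : sphere x C ⊆ {z | R < dist z x} := fun z hz => hltC.trans_eq hz.symm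
  have hlog : HasLogOn (fun z => (z - a) / (z - b)) (Γ ∪ sphere x C) :=
    (hasLogOn_div_of_mem_connectedComponentIn hΓ.isCompact.isClosed hab).union
      (hasLogOn_div_of_dist_le ha hb) hΓ.isCompact.isClosed isClosed_sphere hsphere
      fun p hp q hq => hΓ.exists_isPreconnected_far hK hp.1 hq.1 (hRC.trans_eq hp.2.symm)
        (hRC.trans_eq hq.2.symm)
  have hmem := (hasLogOn_div_iff_mem_connectedComponentIn
    (hΓ.isCompact.union (isCompact_sphere x C))).1 hlog
  have hsub := connectedComponentIn_subset (Γ ∪ sphere x C)ᶜ a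
  have ha' := mem_connectedComponentIn (connectedComponentIn_nonempty_iff.1 ⟨b, hmem⟩)
  have hball : connectedComponentIn (Γ ∪ sphere x C)ᶜ a ⊆ ball x C := by
    refine isPreconnected_connectedComponentIn.subset_left_of_subset_union isOpen_ball
      isClosed_closedBall.isOpen_compl (disjoint_compl_right.mono_left ball_subset_closedBall)
      (fun z hz => ?_) ⟨a, ha', ha.trans_lt hltC⟩
    rcases lt_trichotomy (dist z x) C with h | h | h
    exacts [Or.inl h, (hsub hz (Or.inr h)).elim, Or.inr (not_le.2 h)]
  exact isPreconnected_connectedComponentIn.subset_connectedComponentIn ha'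
    (subset_inter (fun z hz hzΓ => hsub hz (Or.inl hzΓ)) hball) hmem

lemma IsBoundedTurning.mem_connectedComponentIn_diff_closedBall {K : ℝ}
    (hK : IsBoundedTurning Γ K) (hΓ : IsCompact Γ) (hK0 : 0 ≤ K) {a b x : ℂ} {R : ℝ}
    (hab : b ∈ connectedComponentIn Γᶜ a) (ha : (2 * K + 1) * R < dist a x)
    (hb : (2 * K + 1) * R < dist b x) :
    b ∈ connectedComponentIn (Γ ∪ closedBall x R)ᶜ a := by
  refine (hasLogOn_div_iff_mem_connectedComponentIn (hΓ.union (isCompact_closedBall x R))).1 ?_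
  refine (hasLogOn_div_of_mem_connectedComponentIn hΓ.isClosed hab).union
    (hasLogOn_div_closedBall (not_le.2 ha) (not_le.2 hb)) hΓ.isClosed isClosed_closedBall
    (fun z hz => ?_) fun p hp q hq => ?_
  · have := mem_closedBall.1 hz
    exact mem_closedBall.2 (by nlinarith [dist_nonneg (x := z) (y := x)])
  · obtain ⟨J, hJ, hJconn, hpJ, hqJ⟩ := hK p hp.1 q hq.1
    refine ⟨J, fun w hw => ⟨(hJ hw).1, mem_closedBall.2 ?_⟩, hJconn, hpJ, hqJ⟩
    have := mem_closedBall.1 (hJ hw).2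
    nlinarith [dist_triangle w p x, dist_triangle_right p q x, mem_closedBall.1 hp.2,
      mem_closedBall.1 hq.2]

end JordanCurve

section UnboundedComponent

variable {Γ : Set ℂ}

lemma subset_unboundedComponent {P : Set ℂ} (hP : IsPreconnected P) (hPΓ : P ⊆ Γᶜ) {a : ℂ}
    (haP : a ∈ P) (ha : a ∈ unboundedComponent Γ) : P ⊆ unboundedComponent Γ := fun _ hw =>
  ⟨hPΓ hw, connectedComponentIn_eq (hP.subset_connectedComponentIn haP hPΓ hw) ▸ ha.2⟩

lemma isOpen_unboundedComponent (hΓ : IsClosed Γ) : IsOpen (unboundedComponent Γ) := by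
  refine isOpen_iff_mem_nhds.2 fun z hz => mem_of_superset
    (hΓ.isOpen_compl.connectedComponentIn.mem_nhds (mem_connectedComponentIn hz.1)) ?_
  exact subset_unboundedComponent isPreconnected_connectedComponentIn
    (connectedComponentIn_subset _ _) (mem_connectedComponentIn hz.1) hz

lemma frontier_unboundedComponent_subset (hΓ : IsClosed Γ) :
    frontier (unboundedComponent Γ) ⊆ Γ := by
  intro x hx
  by_contra hxΓ
  rw [(isOpen_unboundedComponent hΓ).frontier_eq] at hx
  have hxmem := mem_connectedComponentIn (F := Γᶜ) hxΓ
  obtain ⟨y, hyx, hy⟩ := mem_closure_iff.1 hx.1 _ hΓ.isOpen_compl.connectedComponentIn hxmem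
  exact hx.2 (subset_unboundedComponent isPreconnected_connectedComponentIn
    (connectedComponentIn_subset _ _) hyx hy hxmem)

lemma unboundedComponent_mem_cobounded (hΓ : IsBounded Γ) :
    unboundedComponent Γ ∈ cobounded ℂ := by
  obtain ⟨R, hR⟩ := hΓ.subset_closedBall 0
  refine mem_of_superset
    (isBounded_def.1 (isBounded_closedBall (x := (0 : ℂ)) (r := R)))
    fun z hz => ⟨fun hzΓ => hz (hR hzΓ), fun hbdd => ?_⟩
  have hconn := isPreconnected_compl_closedBall (rank_real_complex ▸ Nat.one_lt_ofNat) (0 : ℂ) R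
  have hfar := hbdd.subset (hconn.subset_connectedComponentIn hz (compl_subset_compl.2 hR))
  refine NormedSpace.unbounded_univ ℝ ℂ ?_
  simpa using hfar.union (isBounded_closedBall (x := (0 : ℂ)) (r := R))

end UnboundedComponent

section JordanArc

lemma mem_connectedComponentIn_compl_image_Icc {g : ℝ → ℂ} {s t : ℝ} (hst : s ≤ t)
    (hg : ContinuousOn g (Icc s t)) (hinj : InjOn g (Icc s t)) {a b : ℂ}
    (ha : a ∉ g '' Icc s t) (hb : b ∉ g '' Icc s t) :
    b ∈ connectedComponentIn (g '' Icc s t)ᶜ a := by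
  have hlog : ∀ p ∉ g '' Icc s t, HasLogOn (fun z => z - p) (g '' Icc s t) := fun p hp =>
    (hasLogOn_Icc (f := (· - p) ∘ g) hst (hg.sub continuousOn_const) fun r hr =>
      sub_ne_zero.2 fun h => hp ⟨r, hr, h⟩).image isCompact_Icc hg hinj
  exact (hasLogOn_div_iff_mem_connectedComponentIn (isCompact_Icc.image_of_continuousOn hg)).1
    ((hlog a ha).div (hlog b hb))

variable {Γ : Set ℂ} (hΓ : IsJordanCurve Γ)
include hΓ

lemma IsJordanCurve.exists_arc {z₀ : ℂ} (hz₀ : z₀ ∈ Γ) {ε : ℝ} (hε : 0 < ε) :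
    ∃ J ⊆ Γ, z₀ ∉ J ∧ Γ \ J ⊆ ball z₀ ε ∧
      ∀ a ∉ J, ∀ b ∉ J, b ∈ connectedComponentIn Jᶜ a := by
  obtain ⟨g, hg, hgl, hgr, hinj, himage⟩ := hΓ.exists_loop hz₀
  obtain ⟨ηl, hηl, hl⟩ := Metric.continuous_iff.1 hg (-Real.pi) ε hε
  obtain ⟨ηr, hηr, hr⟩ := Metric.continuous_iff.1 hg Real.pi ε hε
  obtain ⟨η, hη, hηle⟩ : ∃ η > 0, η ≤ ηl ∧ η ≤ ηr ∧ η ≤ Real.pi :=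
    ⟨min ηl (min ηr Real.pi), by positivity, by simp⟩
  obtain ⟨hηl, hηr, hηpi⟩ := hηle
  have hsub : Icc (-Real.pi + η) (Real.pi - η) ⊆ Ioc (-Real.pi) Real.pi := fun θ hθ =>
    ⟨by linarith [hθ.1], by linarith [hθ.2]⟩
  refine ⟨g '' Icc (-Real.pi + η) (Real.pi - η),
    (image_mono (hsub.trans Ioc_subset_Icc_self)).trans himage.subset, ?_, ?_, fun a ha b hb =>
    mem_connectedComponentIn_compl_image_Icc (by linarith) hg.continuousOn (hinj.mono hsub) ha hb⟩
  · rintro ⟨θ, hθ, hθz⟩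
    have hθpi := hinj (hsub hθ) (right_mem_Ioc.2 (by linarith [Real.pi_pos])) (hθz.trans hgr.symm)
    linarith [hθ.2]
  · rintro z ⟨hz, hzJ⟩
    obtain ⟨θ, hθ, rfl⟩ := himage ▸ hz
    rcases lt_or_ge θ (-Real.pi + η) with hθl | hθl
    · refine mem_ball.2 (hgl ▸ hl θ ?_)
      rw [Real.dist_eq, abs_of_nonneg] <;> linarith [hθ.1]
    · have hθr : Real.pi - η < θ := not_le.1 fun h => hzJ ⟨θ, ⟨hθl, h⟩, rfl⟩
      refine mem_ball.2 (hgr ▸ hr θ ?_)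
      rw [Real.dist_eq, abs_sub_comm, abs_of_nonneg] <;> linarith [hθ.2]

-- If `Ω` stayed away from `z₀ ∈ Γ`, its frontier would lie on a subarc of `Γ` avoiding `z₀`; but
-- an arc does not separate `z₀` from `Ω`.
lemma IsJordanCurve.subset_closure_unboundedComponent (hne : (unboundedComponent Γ).Nonempty) :
    Γ ⊆ closure (unboundedComponent Γ) := by
  intro z₀ hz₀
  have hopen := isOpen_unboundedComponent hΓ.isCompact.isClosed
  by_contra hcl
  obtain ⟨ε, hε, hball⟩ := Metric.isOpen_iff.1 isClosed_closure.isOpen_compl z₀ hcl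
  obtain ⟨J, hJΓ, hz₀J, hJ, hJconn⟩ := hΓ.exists_arc hz₀ hε
  have hfrontier : closure (unboundedComponent Γ) \ unboundedComponent Γ ⊆ J := fun x hx => by
    rw [← hopen.frontier_eq] at hx
    by_contra hxJ
    exact hball (hJ ⟨frontier_unboundedComponent_subset hΓ.isCompact.isClosed hx, hxJ⟩) hx.1
  obtain ⟨b, hb⟩ := hne
  have hbJ : b ∉ J := fun hbJ => hb.1 (hJΓ hbJ)
  have hsub : connectedComponentIn Jᶜ b ⊆ unboundedComponent Γ :=
    isPreconnected_connectedComponentIn.subset_of_closure_inter_subset hopen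
      ⟨b, mem_connectedComponentIn hbJ, hb⟩ fun x hx =>
        by_contra fun hxΩ => connectedComponentIn_subset _ _ hx.2 (hfrontier ⟨hx.1, hxΩ⟩)
  exact (hsub (hJconn b hbJ z₀ hz₀J)).1 hz₀

end JordanArc

section InjectiveHolomorphic

lemma not_eventually_eq_of_injOn {X Y : Type*} [TopologicalSpace X] {f : X → Y} {U : Set X}
    {x : X} [(𝓝[≠] x).NeBot] (hinj : InjOn f U) (hU : U ∈ 𝓝 x) : ¬ ∀ᶠ z in 𝓝 x, f z = f x := by
  intro h
  obtain ⟨z, ⟨hz, hzU⟩, hne⟩ :=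
    ((h.and hU).filter_mono nhdsWithin_le_nhds |>.and self_mem_nhdsWithin :
      ∀ᶠ z in 𝓝[≠] x, (f z = f x ∧ z ∈ U) ∧ z ∈ ({x}ᶜ : Set X)).exists
  exact hne (hinj hzU (mem_of_mem_nhds hU) hz)

variable {U : Set ℂ} {f : ℂ → ℂ} {x : ℂ}
  (hU : IsOpen U) (hf : DifferentiableOn ℂ f U) (hinj : InjOn f U)
include hU hf hinj

lemma map_nhds_eq_of_injOn (hx : x ∈ U) : map f (𝓝 x) = 𝓝 (f x) :=
  le_antisymm (hf.differentiableAt (hU.mem_nhds hx)).continuousAt <|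
    ((hf.analyticAt (hU.mem_nhds hx)).eventually_constant_or_nhds_le_map_nhds).resolve_left
      (not_eventually_eq_of_injOn hinj (hU.mem_nhds hx))

lemma image_mem_nhds_of_injOn (hx : x ∈ U) : f '' U ∈ 𝓝 (f x) :=
  map_nhds_eq_of_injOn hU hf hinj hx ▸ image_mem_map (hU.mem_nhds hx)

lemma continuousAt_invFunOn (hx : x ∈ U) : ContinuousAt (Function.invFunOn f U) (f x) := by
  have hleft := hinj.leftInvOn_invFunOn
  rw [ContinuousAt, hleft hx, ← map_nhds_eq_of_injOn hU hf hinj hx, tendsto_map'_iff]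
  refine tendsto_id.congr' ?_
  filter_upwards [hU.mem_nhds hx] with y hy using (hleft hy).symm

lemma tendsto_invFunOn_nhdsNE (hx : x ∈ U) :
    Tendsto (Function.invFunOn f U) (𝓝[≠] f x) (𝓝[≠] x) := by
  refine tendsto_nhdsWithin_iff.2 ⟨?_, ?_⟩
  · have hcont := (continuousAt_invFunOn hU hf hinj hx).tendsto
    rw [hinj.leftInvOn_invFunOn hx] at hcont
    exact hcont.mono_left nhdsWithin_le_nhds
  · filter_upwards [self_mem_nhdsWithin,
      nhdsWithin_le_nhds (image_mem_nhds_of_injOn hU hf hinj hx)] with w hw hwU hwx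
    exact hw ((Function.invFunOn_eq hwU).symm.trans (congrArg f hwx))

lemma eventually_deriv_ne_zero_of_injOn (hx : x ∈ U) : ∀ᶠ y in 𝓝[≠] x, deriv f y ≠ 0 := by
  refine ((hf.analyticAt (hU.mem_nhds hx)).deriv.eventually_eq_zero_or_eventually_ne_zero
    ).resolve_left fun h0 => not_eventually_eq_of_injOn hinj (hU.mem_nhds hx) ?_
  obtain ⟨r, hr, hball⟩ := Metric.mem_nhds_iff.1 (h0.and (hU.mem_nhds hx))
  filter_upwards [ball_mem_nhds x hr] with y hy
  exact isOpen_ball.is_const_of_deriv_eq_zero (convex_ball x r).isPreconnected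
    (hf.mono fun z hz => (hball hz).2) (fun z hz => (hball hz).1) hy (mem_ball_self hr)

lemma differentiableAt_invFunOn_of_deriv_ne_zero (hx : x ∈ U) (h : deriv f x ≠ 0) :
    DifferentiableAt ℂ (Function.invFunOn f U) (f x) := by
  refine (HasDerivAt.of_local_left_inverse (f := f) (f' := deriv f x)
    (continuousAt_invFunOn hU hf hinj hx) ?_ h ?_).differentiableAt
  · rw [hinj.leftInvOn_invFunOn hx]
    exact (hf.differentiableAt (hU.mem_nhds hx)).hasDerivAt
  · filter_upwards [image_mem_nhds_of_injOn hU hf hinj hx] with w hw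
    exact Function.invFunOn_eq hw

-- The zeros of `deriv f` are isolated, so they give removable singularities of the inverse. (A
-- posteriori there are none.)
lemma differentiableAt_invFunOn (hx : x ∈ U) :
    DifferentiableAt ℂ (Function.invFunOn f U) (f x) := by
  refine (analyticAt_of_differentiable_on_punctured_nhds_of_continuousAt ?_
    (continuousAt_invFunOn hU hf hinj hx)).differentiableAt
  filter_upwards [(tendsto_invFunOn_nhdsNE hU hf hinj hx).eventually
      (eventually_deriv_ne_zero_of_injOn hU hf hinj hx),
    nhdsWithin_le_nhds (image_mem_nhds_of_injOn hU hf hinj hx)] with w hw hwU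
  rw [← Function.invFunOn_eq hwU]
  exact differentiableAt_invFunOn_of_deriv_ne_zero hU hf hinj (Function.invFunOn_mem hwU) hw

end InjectiveHolomorphic

section ExteriorMap

/-- The inverse of an exterior conformal map `Φ : Ω → extDisk`. Only its values on `extDisk` are
meaningful. -/
def extInv (Ω : Set ℂ) (Φ : ℂ → ℂ) : ℂ → ℂ := Function.invFunOn Φ Ω

namespace IsExtConformal

variable {Ω : Set ℂ} {Φ : ℂ → ℂ} (h : IsExtConformal Ω Φ)
include h

lemma tendsto_norm : Tendsto (fun z => ‖Φ z‖) (cobounded ℂ) atTop := by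
  obtain ⟨-, -, c, hc, hlim⟩ := h
  have hmul : Tendsto (fun z => ‖Φ z / z‖ * ‖z‖) (cobounded ℂ) atTop :=
    hlim.norm.pos_mul_atTop (by simpa using hc.ne') tendsto_norm_cobounded_atTop
  refine hmul.congr' ?_
  filter_upwards [eventually_ne_cobounded (0 : ℂ)] with z hz
  rw [← norm_mul, div_mul_cancel₀ _ hz]

lemma extInv_mem {w : ℂ} (hw : w ∈ extDisk) : extInv Ω Φ w ∈ Ω :=
  Function.invFunOn_mem (h.2.1.surjOn hw)

lemma apply_extInv {w : ℂ} (hw : w ∈ extDisk) : Φ (extInv Ω Φ w) = w :=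
  Function.invFunOn_eq (h.2.1.surjOn hw)

lemma extInv_apply {z : ℂ} (hz : z ∈ Ω) : extInv Ω Φ (Φ z) = z :=
  h.2.1.injOn.leftInvOn_invFunOn hz

lemma injOn_extInv : InjOn (extInv Ω Φ) extDisk := fun a ha b hb hab => by
  rw [← h.apply_extInv ha, hab, h.apply_extInv hb]

lemma differentiableOn_extInv (hΩ : IsOpen Ω) : DifferentiableOn ℂ (extInv Ω Φ) extDisk :=
  fun w hw => by
    have hdiff := differentiableAt_invFunOn hΩ h.1 h.2.1.injOn (h.extInv_mem hw)
    rw [h.apply_extInv hw] at hdiff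
    exact hdiff.differentiableWithinAt

-- The complement `D` of a large disk is connected and `extInv '' D` avoids a given circle, so it
-- stays on one side of it.
lemma tendsto_extInv (hΩ : IsOpen Ω) (hcob : Ω ∈ cobounded ℂ) :
    Tendsto (extInv Ω Φ) (cobounded ℂ) (cobounded ℂ) := by
  obtain ⟨R, hR⟩ := (isBounded_compl_iff.2 hcob).subset_closedBall 0
  refine (hasBasis_cobounded_compl_closedBall (0 : ℂ)).tendsto_right_iff.2 fun S₀ _ => ?_
  obtain ⟨S, hS₀, hRS⟩ : ∃ S, S₀ ≤ S ∧ R < S := ⟨max S₀ (R + 1), le_max_left _ _, by simp⟩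
  have hsphere : sphere 0 S ⊆ Ω := fun z hz => by_contra fun hzΩ =>
    (mem_closedBall.1 (hR hzΩ)).not_gt (hRS.trans_eq hz.symm)
  obtain ⟨B, hB⟩ := ((isCompact_sphere (0 : ℂ) S).image_of_continuousOn
    (h.1.continuousOn.mono hsphere)).isBounded.subset_closedBall 0
  have hD : (closedBall 0 (max B 1))ᶜ ⊆ extDisk := fun w hw =>
    (le_max_right B 1).trans_lt (not_le.1 fun hle => hw (mem_closedBall_zero_iff.2 hle))
  have hconn : IsPreconnected (extInv Ω Φ '' (closedBall 0 (max B 1))ᶜ) :=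
    (isPreconnected_compl_closedBall (rank_real_complex ▸ Nat.one_lt_ofNat) 0 _).image _
      ((h.differentiableOn_extInv hΩ).continuousOn.mono hD)
  have hfar : extInv Ω Φ '' (closedBall 0 (max B 1))ᶜ ⊆ (closedBall 0 S)ᶜ := by
    refine hconn.subset_left_of_subset_union isClosed_closedBall.isOpen_compl isOpen_ball
      (disjoint_compl_left.mono_right ball_subset_closedBall) ?_ ?_
    · rintro _ ⟨w, hw, rfl⟩
      by_contra hS
      obtain ⟨hle, hge⟩ := not_or.1 hS
      have hmem : extInv Ω Φ w ∈ sphere 0 S := le_antisymm (not_not.1 hle) (not_lt.1 hge)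
      have hwB := hB ⟨_, hmem, h.apply_extInv (hD hw)⟩
      exact hw (closedBall_subset_closedBall (le_max_left _ _) hwB)
    · obtain ⟨z, hΦz, hz⟩ := ((h.tendsto_norm.eventually_gt_atTop (max B 1)).and
        (tendsto_norm_cobounded_atTop.eventually_gt_atTop S)).exists
      have hzS : z ∉ closedBall 0 S := fun hle => (mem_closedBall_zero_iff.1 hle).not_gt hz
      have hzΩ : z ∈ Ω := by_contra fun hzΩ => hzS (closedBall_subset_closedBall hRS.le (hR hzΩ))
      exact ⟨z, ⟨Φ z, fun hle => (mem_closedBall_zero_iff.1 hle).not_gt hΦz,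
        h.extInv_apply hzΩ⟩, hzS⟩
  filter_upwards [isBounded_def.1 (isBounded_closedBall (x := (0 : ℂ)) (r := max B 1))] with w hw
  exact fun hle => hfar ⟨w, hw, rfl⟩ (closedBall_subset_closedBall hS₀ hle)

lemma isBounded_image_inter (hΩ : IsOpen Ω) (hcob : Ω ∈ cobounded ℂ) {A : Set ℂ}
    (hA : IsBounded A) : IsBounded (Φ '' (Ω ∩ A)) := by
  have hpreimage : IsBounded (extInv Ω Φ ⁻¹' A) :=
    isBounded_def.2 (h.tendsto_extInv hΩ hcob (isBounded_def.1 hA))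
  refine hpreimage.subset ?_
  rintro _ ⟨z, ⟨hz, hzA⟩, rfl⟩
  rwa [mem_preimage, h.extInv_apply hz]

lemma isClosed_superlevel (hΩ : IsOpen Ω) (hcob : Ω ∈ cobounded ℂ) {r : ℝ} (hr : 1 < r) :
    IsClosed {ζ ∈ Ω | r ≤ ‖Φ ζ‖} := by
  refine isClosed_of_closure_subset fun x hx => ?_
  obtain ⟨R, hR⟩ :=
    (h.isBounded_image_inter hΩ hcob (isBounded_ball (x := x) (r := 1))).subset_closedBall 0
  have hD : closedBall 0 R ∩ {w : ℂ | r ≤ ‖w‖} ⊆ extDisk := fun w hw => hr.trans_le hw.2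
  have hcompact : IsCompact (extInv Ω Φ '' (closedBall 0 R ∩ {w : ℂ | r ≤ ‖w‖})) :=
    ((isCompact_closedBall _ _).inter_right
      (isClosed_le continuous_const continuous_norm)).image_of_continuousOn
      ((h.differentiableOn_extInv hΩ).continuousOn.mono hD)
  have hsub : ball x 1 ∩ {ζ ∈ Ω | r ≤ ‖Φ ζ‖} ⊆
      extInv Ω Φ '' (closedBall 0 R ∩ {w : ℂ | r ≤ ‖w‖}) := fun ζ hζ =>
    ⟨Φ ζ, ⟨hR ⟨ζ, ⟨hζ.2.1, hζ.1⟩, rfl⟩, hζ.2.2⟩, h.extInv_apply hζ.2.1⟩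
  obtain ⟨w, hw, rfl⟩ := closure_minimal hsub hcompact.isClosed
    (isOpen_ball.inter_closure ⟨mem_ball_self one_pos, hx⟩)
  exact ⟨h.extInv_mem (hD hw), (h.apply_extInv (hD hw)).symm ▸ hw.2⟩

lemma isPreconnected (hΩ : IsOpen Ω) : IsPreconnected Ω := by
  have hextDisk : IsPreconnected {w : ℂ | 1 < ‖w‖} := by
    simpa only [dist_zero_right] using
      isPreconnected_setOf_lt_dist (rank_real_complex ▸ Nat.one_lt_ofNat) (0 : ℂ) 1
  have himage : extInv Ω Φ '' extDisk = Ω := Subset.antisymm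
    (image_subset_iff.2 fun w hw => h.extInv_mem hw)
    fun z hz => ⟨Φ z, h.2.1.mapsTo hz, h.extInv_apply hz⟩
  exact himage ▸ hextDisk.image _ (h.differentiableOn_extInv hΩ).continuousOn

lemma levelCurve_eq {v : ℝ} (hv : 0 < v) :
    levelCurve Ω Φ v = extInv Ω Φ '' sphere 0 (1 + v) := by
  have hD : sphere 0 (1 + v) ⊆ extDisk := fun w hw =>
    (lt_add_of_pos_right 1 hv).trans_eq (mem_sphere_zero_iff_norm.1 hw).symm
  refine Subset.antisymm (fun z hz => ?_) ?_
  · exact ⟨Φ z, mem_sphere_zero_iff_norm.2 hz.2, h.extInv_apply hz.1⟩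
  · rintro _ ⟨w, hw, rfl⟩
    exact ⟨h.extInv_mem (hD hw), by rw [h.apply_extInv (hD hw), mem_sphere_zero_iff_norm.1 hw]⟩

lemma exists_rho_eq (hΩ : IsOpen Ω) {v : ℝ} (hv : 0 < v) (z : ℂ) :
    ∃ w, ‖w‖ = 1 + v ∧ rho Ω Φ v z = dist z (extInv Ω Φ w) := by
  have hD : sphere 0 (1 + v) ⊆ extDisk := fun w hw =>
    (lt_add_of_pos_right 1 hv).trans_eq (mem_sphere_zero_iff_norm.1 hw).symm
  have hcompact := (isCompact_sphere (0 : ℂ) (1 + v)).image_of_continuousOn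
    ((h.differentiableOn_extInv hΩ).continuousOn.mono hD)
  obtain ⟨_, ⟨w, hw, rfl⟩, hdist⟩ := hcompact.exists_infDist_eq_dist
    ((NormedSpace.sphere_nonempty.2 (by linarith)).image _) z
  exact ⟨w, mem_sphere_zero_iff_norm.1 hw, by rw [rho, h.levelCurve_eq hv, hdist]⟩

lemma rho_le_dist (hΩ : IsOpen Ω) (hcob : Ω ∈ cobounded ℂ) {v : ℝ} (hv : 0 < v) {z ζ : ℂ}
    (hz : z ∉ Ω) (hζ : ζ ∈ Ω) (hζv : 1 + v ≤ ‖Φ ζ‖) : rho Ω Φ v z ≤ dist z ζ := by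
  obtain ⟨p, hp, hpv⟩ : ∃ p ∈ segment ℝ z ζ, p ∈ levelCurve Ω Φ v := by
    by_contra! hno
    have hcl : closure {ζ ∈ Ω | 1 + v < ‖Φ ζ‖} ⊆ {ζ ∈ Ω | 1 + v ≤ ‖Φ ζ‖} :=
      closure_minimal (fun y hy => ⟨hy.1, hy.2.le⟩)
        (h.isClosed_superlevel hΩ hcob (lt_add_of_pos_right 1 hv))
    have hstrict : ∀ x ∈ segment ℝ z ζ, x ∈ {ζ ∈ Ω | 1 + v ≤ ‖Φ ζ‖} →
        x ∈ {ζ ∈ Ω | 1 + v < ‖Φ ζ‖} := fun x hx hxv =>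
      ⟨hxv.1, hxv.2.lt_of_ne fun he => hno x hx ⟨hxv.1, he.symm⟩⟩
    have hsub := (convex_segment z ζ).isPreconnected.subset_of_closure_inter_subset
      (h.1.continuousOn.norm.isOpen_inter_preimage hΩ isOpen_Ioi)
      ⟨ζ, right_mem_segment ℝ z ζ, hstrict ζ (right_mem_segment ℝ z ζ) ⟨hζ, hζv⟩⟩
      fun x hx => hstrict x hx.2 (hcl hx.1)
    exact hz (hsub (left_mem_segment ℝ z ζ)).1
  calc rho Ω Φ v z ≤ dist z p := infDist_le_dist_of_mem hpv
    _ ≤ dist z ζ := by linarith [dist_add_dist_of_mem_segment hp, dist_nonneg (x := p) (y := ζ)]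

lemma rho_pos (hΩ : IsOpen Ω) {v : ℝ} (hv : 0 < v) {z : ℂ} (hz : z ∉ Ω) : 0 < rho Ω Φ v z := by
  obtain ⟨w, hw, hrho⟩ := h.exists_rho_eq hΩ hv z
  rw [hrho, dist_pos]
  rintro rfl
  exact hz (h.extInv_mem ((lt_add_of_pos_right 1 hv).trans_eq hw.symm))

lemma rho_mono (hΩ : IsOpen Ω) (hcob : Ω ∈ cobounded ℂ) {u v : ℝ} (hv : 0 < v) (hvu : v ≤ u)
    {z : ℂ} (hz : z ∉ Ω) : rho Ω Φ v z ≤ rho Ω Φ u z := by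
  obtain ⟨w, hw, hrho⟩ := h.exists_rho_eq hΩ (hv.trans_le hvu) z
  have hwD : w ∈ extDisk := (lt_add_of_pos_right 1 (hv.trans_le hvu)).trans_eq hw.symm
  rw [hrho]
  exact h.rho_le_dist hΩ hcob hv hz (h.extInv_mem hwD) (by rw [h.apply_extInv hwD]; linarith)

end IsExtConformal

end ExteriorMap

section Distortion

lemma exists_differentiableOn_exp_eq {F : ℂ → ℂ} {c : ℂ} {R : ℝ}
    (hF : DifferentiableOn ℂ F (ball c R)) (h0 : ∀ w ∈ ball c R, F w ≠ 0) :
    ∃ L : ℂ → ℂ, DifferentiableOn ℂ L (ball c R) ∧ ∀ w ∈ ball c R, exp (L w) = F w := by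
  obtain ⟨L, hLc, hL⟩ :=
    ((hF.deriv isOpen_ball).div hF h0).isExactOn_ball.with_val_at c (log (F c))
  refine ⟨L, fun w hw => (hL w hw).differentiableAt.differentiableWithinAt, fun w hw => ?_⟩
  have hderiv : ∀ x ∈ ball c R, HasDerivAt (fun x => F x * exp (-L x)) 0 x := fun x hx => by
    have hmul := (hF.differentiableAt (isOpen_ball.mem_nhds hx)).hasDerivAt.mul (hL x hx).neg.cexp
    refine hmul.congr_deriv ?_
    simp only [Pi.div_apply, Pi.neg_apply]
    field_simp [h0 x hx]
    ring
  have hc : c ∈ ball c R := mem_ball_self (pos_of_mem_ball hw)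
  have hconst : F w * exp (-L w) = F c * exp (-L c) :=
    isOpen_ball.is_const_of_deriv_eq_zero (convex_ball c R).isPreconnected
      (fun x hx => (hderiv x hx).differentiableAt.differentiableWithinAt)
      (fun x hx => (hderiv x hx).deriv) hw hc
  rw [hLc, exp_neg (log _), exp_log (h0 c hc), mul_inv_cancel₀ (h0 c hc), exp_neg] at hconst
  exact (eq_of_mul_inv_eq_one hconst).symm

variable {L : ℂ → ℂ} {a : ℂ} {s : ℝ}

lemma norm_deriv_mul_le_norm_sub_of_norm_deriv_sub_le (hL : DifferentiableOn ℂ L (ball a s))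
    (hb : ∀ w ∈ ball a s, ‖deriv L w - deriv L a‖ ≤ ‖deriv L a‖ / 2) {w : ℂ}
    (hw : w ∈ ball a s) : ‖deriv L a‖ / 2 * ‖w - a‖ ≤ ‖L w - L a‖ := by
  have hderiv : ∀ x ∈ ball a s, HasDerivWithinAt (fun x => L x - deriv L a * x)
      (deriv L x - deriv L a) (ball a s) x := fun x hx => by
    have hlin := (hasDerivAt_id' x).const_mul (deriv L a)
    rw [mul_one] at hlin
    exact ((hL.differentiableAt (isOpen_ball.mem_nhds hx)).hasDerivAt.sub hlin).hasDerivWithinAt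
  have hmv := (convex_ball a s).norm_image_sub_le_of_norm_hasDerivWithin_le hderiv hb
    (mem_ball_self (pos_of_mem_ball hw)) hw
  calc ‖deriv L a‖ / 2 * ‖w - a‖
      = ‖deriv L a * (w - a)‖ - ‖deriv L a‖ / 2 * ‖w - a‖ := by rw [norm_mul]; ring
    _ ≤ ‖deriv L a * (w - a)‖ - ‖L w - deriv L a * w - (L a - deriv L a * a)‖ := by gcongr
    _ ≤ ‖deriv L a * (w - a) + (L w - deriv L a * w - (L a - deriv L a * a))‖ :=
        norm_sub_le_norm_add _ _
    _ = ‖L w - L a‖ := by congr 1; ring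

lemma ball_subset_image_of_norm_deriv_sub_le (hL : DifferentiableOn ℂ L (ball a s))
    (hb : ∀ w ∈ ball a s, ‖deriv L w - deriv L a‖ ≤ ‖deriv L a‖ / 2) :
    ball (L a) (‖deriv L a‖ * s / 4) ⊆ L '' ball a s := by
  intro ζ hζ
  have hpos : 0 < ‖deriv L a‖ * s / 4 := pos_of_mem_ball hζ
  have hs : 0 < s := by by_contra! hs; nlinarith [norm_nonneg (deriv L a)]
  have hA : 0 < ‖deriv L a‖ := by by_contra! hA; nlinarith
  obtain ⟨r, hr, hrs⟩ : ∃ r, dist ζ (L a) * 4 / ‖deriv L a‖ < r ∧ r < s :=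
    exists_between (by rw [div_lt_iff₀ hA]; linarith [mem_ball.1 hζ])
  have hr0 : 0 < r := lt_of_le_of_lt (by positivity) hr
  have hsub : closedBall a r ⊆ ball a s := closedBall_subset_ball hrs
  have hlow : ∀ w ∈ sphere a r, ‖deriv L a‖ / 2 * r ≤ ‖L w - L a‖ := fun w hw => by
    rw [← mem_sphere_iff_norm.1 hw]
    exact norm_deriv_mul_le_norm_sub_of_norm_deriv_sub_le hL hb (hsub (sphere_subset_closedBall hw))
  have hne : ∃ᶠ w in 𝓝 a, L w ≠ L a :=
    ((hL.differentiableAt (isOpen_ball.mem_nhds (mem_ball_self hs))).hasDerivAt.eventually_ne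
      (norm_pos_iff.1 hA)).frequently.filter_mono nhdsWithin_le_nhds
  refine image_mono hsub
    ((hL.diffContOnCl_ball hsub).ball_subset_image_closedBall hr0 hlow hne ?_)
  rw [div_lt_iff₀ hA] at hr
  rw [mem_ball]
  linarith

lemma ball_subset_image_of_norm_deriv_le (hL : DifferentiableOn ℂ L (ball a s))
    (hb : ∀ w ∈ ball a s, ‖deriv L w‖ ≤ 2 * ‖deriv L a‖) :
    ball (L a) (‖deriv L a‖ * s / 24) ⊆ L '' ball a s := by
  rcases le_or_gt s 0 with hs | hs
  · rw [ball_eq_empty.2 (by nlinarith [norm_nonneg (deriv L a)])]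
    exact empty_subset _
  have hsub : ball a (s / 6) ⊆ ball a s := ball_subset_ball (by linarith)
  have hmaps : MapsTo (deriv L) (ball a s) (closedBall (deriv L a) (3 * ‖deriv L a‖)) :=
    fun w hw => mem_closedBall_iff_norm.2 <| by
      linarith [norm_sub_le (deriv L w) (deriv L a), hb w hw]
  have hclose : ∀ w ∈ ball a (s / 6), ‖deriv L w - deriv L a‖ ≤ ‖deriv L a‖ / 2 := fun w hw =>
    calc ‖deriv L w - deriv L a‖ = dist (deriv L w) (deriv L a) := (dist_eq_norm _ _).symm
      _ ≤ 3 * ‖deriv L a‖ / s * dist w a :=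
        Complex.dist_le_div_mul_dist_of_mapsTo_ball (hL.deriv isOpen_ball) hmaps (hsub hw)
      _ ≤ 3 * ‖deriv L a‖ / s * (s / 6) := by gcongr; exact (mem_ball.1 hw).le
      _ = ‖deriv L a‖ / 2 := by field_simp; ring
  calc ball (L a) (‖deriv L a‖ * s / 24) = ball (L a) (‖deriv L a‖ * (s / 6) / 4) := by ring_nf
    _ ⊆ L '' ball a (s / 6) := ball_subset_image_of_norm_deriv_sub_le (hL.mono hsub) hclose
    _ ⊆ L '' ball a s := image_mono hsub

-- Landau's device: a point maximizing `‖deriv L w‖ * (r - dist w c)` has a disc around it in which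
-- `‖deriv L‖` at most doubles.
theorem exists_ball_subset_image {c : ℂ} {r R : ℝ} (hr : 0 ≤ r) (hrR : r < R)
    (hL : DifferentiableOn ℂ L (ball c R)) :
    ∃ a, ball a (‖deriv L c‖ * r / 48) ⊆ L '' ball c R := by
  have hsub : closedBall c r ⊆ ball c R := closedBall_subset_ball hrR
  have hcont : ContinuousOn (fun w => ‖deriv L w‖ * (r - dist w c)) (closedBall c r) :=
    ((hL.deriv isOpen_ball).continuousOn.mono hsub).norm.mul (by fun_prop)
  obtain ⟨b, hb, hmax⟩ := (isCompact_closedBall c r).exists_isMaxOn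
    ⟨c, mem_closedBall_self hr⟩ hcont
  have hc := hmax (mem_closedBall_self hr)
  simp only [mem_ofPred_eq, dist_self, sub_zero] at hc
  set σ := r - dist b c
  have hball : ball b (σ / 2) ⊆ closedBall c r := fun w hw => by
    rw [mem_closedBall]
    linarith [dist_triangle w b c, mem_ball.1 hw, mem_closedBall.1 hb]
  have hdouble : ∀ w ∈ ball b (σ / 2), ‖deriv L w‖ ≤ 2 * ‖deriv L b‖ := fun w hw => by
    have hσ0 : 0 < σ / 2 := pos_of_mem_ball hw
    have hle : ‖deriv L w‖ * (σ / 2) ≤ 2 * ‖deriv L b‖ * (σ / 2) :=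
      calc ‖deriv L w‖ * (σ / 2) ≤ ‖deriv L w‖ * (r - dist w c) := by
            gcongr; linarith [dist_triangle w b c, mem_ball.1 hw]
        _ ≤ ‖deriv L b‖ * σ := hmax (hball hw)
        _ = 2 * ‖deriv L b‖ * (σ / 2) := by ring
    exact le_of_mul_le_mul_right hle hσ0
  refine ⟨L b, (ball_subset_ball ?_).trans <|
    (ball_subset_image_of_norm_deriv_le (hL.mono (hball.trans hsub)) hdouble).trans
      (image_mono (hball.trans hsub))⟩
  linarith

lemma le_pi_of_ball_subset_image_of_injOn_exp {U : Set ℂ} (hinj : InjOn (fun w => exp (L w)) U)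
    (hs : ball a s ⊆ L '' U) : s ≤ Real.pi := by
  by_contra! hlt
  obtain ⟨w, hw, hwa⟩ := hs (show a + Real.pi * I ∈ ball a s by simpa [abs_of_pos Real.pi_pos])
  obtain ⟨w', hw', hwa'⟩ :=
    hs (show a - Real.pi * I ∈ ball a s by simpa [abs_of_pos Real.pi_pos])
  have hww : w = w' := hinj hw hw' <| by
    simp only [hwa, hwa', exp_add, exp_sub, exp_pi_mul_I, div_neg, div_one, mul_neg, mul_one]
  have hpi : (Real.pi : ℂ) * I = 0 := by
    rw [hww, hwa'] at hwa
    linear_combination -hwa / 2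
  simp [Real.pi_ne_zero] at hpi

/-- A weak form of the Koebe distortion theorem. -/
theorem norm_deriv_mul_le_of_injOn {F : ℂ → ℂ} {c z : ℂ} {R : ℝ}
    (hF : DifferentiableOn ℂ F (ball c R)) (hinj : InjOn F (ball c R))
    (hz : ∀ w ∈ ball c R, F w ≠ z) :
    ‖deriv F c‖ * R ≤ 48 * Real.pi * ‖F c - z‖ := by
  rcases le_or_gt R 0 with hR | hR
  · exact (mul_nonpos_of_nonneg_of_nonpos (norm_nonneg _) hR).trans
      (mul_nonneg (by positivity) (norm_nonneg _))
  have hc : c ∈ ball c R := mem_ball_self hR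
  obtain ⟨L, hL, hexp⟩ := exists_differentiableOn_exp_eq (hF.sub_const z)
    fun w hw => sub_ne_zero.2 (hz w hw)
  have hinjL : InjOn (fun w => exp (L w)) (ball c R) := fun w hw w' hw' he =>
    hinj hw hw' (sub_left_injective ((hexp w hw).symm.trans (he.trans (hexp w' hw'))))
  have hbound : ‖deriv L c‖ * R ≤ 48 * Real.pi := by
    have hlim : Tendsto (fun r => ‖deriv L c‖ * r) (𝓝[<] R) (𝓝 (‖deriv L c‖ * R)) :=
      (tendsto_nhdsWithin_of_tendsto_nhds tendsto_id).const_mul _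
    refine le_of_tendsto hlim ?_
    filter_upwards [Ioo_mem_nhdsLT hR] with r hr
    obtain ⟨a, ha⟩ := exists_ball_subset_image hr.1.le hr.2 hL
    linarith [le_pi_of_ball_subset_image_of_injOn_exp hinjL ha]
  have hderiv : deriv F c = (F c - z) * deriv L c := by
    rw [← hexp c hc, ← (hL.differentiableAt (isOpen_ball.mem_nhds hc)).hasDerivAt.cexp.deriv,
      ← deriv_sub_const z]
    exact Filter.EventuallyEq.deriv_eq <|
      (eventually_of_mem (isOpen_ball.mem_nhds hc) hexp).mono fun _ h => h.symm
  calc ‖deriv F c‖ * R = ‖deriv L c‖ * R * ‖F c - z‖ := by rw [hderiv, norm_mul]; ring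
    _ ≤ 48 * Real.pi * ‖F c - z‖ := by gcongr

end Distortion

section Growth

lemma norm_one_add_mul {a : ℂ} (ha : ‖a‖ = 1) {s : ℝ} (hs : 0 ≤ 1 + s) :
    ‖(1 + s : ℂ) * a‖ = 1 + s := by
  rw [norm_mul, ha, mul_one, ← ofReal_one, ← ofReal_add, norm_real, Real.norm_of_nonneg hs]

lemma one_add_mul_mem_extDisk {a : ℂ} (ha : ‖a‖ = 1) {s : ℝ} (hs : 0 < s) :
    (1 + s : ℂ) * a ∈ extDisk :=
  (lt_add_of_pos_right 1 hs).trans_eq (norm_one_add_mul ha (by linarith)).symm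

lemma isOpen_extDisk : IsOpen extDisk := isOpen_lt continuous_const continuous_norm

section

variable {F : ℂ → ℂ} {z : ℂ} (hF : DifferentiableOn ℂ F extDisk) (hinj : InjOn F extDisk)
  (hz : ∀ w ∈ extDisk, F w ≠ z)
include hF hinj hz

lemma norm_deriv_mul_sub_one_le_of_injOn_extDisk (w : ℂ) :
    ‖deriv F w‖ * (‖w‖ - 1) ≤ 48 * Real.pi * ‖F w - z‖ := by
  have hsub : ball w (‖w‖ - 1) ⊆ extDisk := fun y hy => by
    rw [mem_ball, dist_comm, dist_eq_norm] at hy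
    change 1 < ‖y‖
    linarith [norm_sub_norm_le w y]
  exact norm_deriv_mul_le_of_injOn (hF.mono hsub) (hinj.mono hsub) fun y hy => hz y (hsub hy)

-- In the variable `x = log (‖w‖ - 1)`, the distortion bound says `‖H'‖ ≤ 48π ‖H‖` along a ray.
lemma norm_sub_le_rpow_mul_of_injOn_extDisk {a : ℂ} (ha : ‖a‖ = 1) {u v : ℝ} (hv : 0 < v)
    (hvu : v ≤ u) :
    ‖F ((1 + u) * a) - z‖ ≤ (u / v) ^ (48 * Real.pi) * ‖F ((1 + v) * a) - z‖ := by
  have hu := hv.trans_le hvu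
  set H : ℝ → ℂ := fun x => F ((1 + Real.exp x) * a) - z with hH
  have hderiv : ∀ x, HasDerivAt H (deriv F ((1 + Real.exp x) * a) * (Real.exp x * a)) x :=
    fun x => by
      have hray : HasDerivAt (fun x : ℝ => (1 + (Real.exp x : ℝ) : ℂ) * a)
          ((Real.exp x : ℝ) * a) x :=
        ((Real.hasDerivAt_exp x).ofReal_comp.const_add 1).mul_const a
      exact ((hF.differentiableAt (isOpen_extDisk.mem_nhds
        (one_add_mul_mem_extDisk ha (Real.exp_pos x)))).hasDerivAt.comp x hray).sub_const z
  have hbound : ∀ x, ‖deriv F ((1 + Real.exp x) * a) * (Real.exp x * a)‖ ≤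
      48 * Real.pi * ‖H x‖ + 0 := fun x => by
    have hx := norm_deriv_mul_sub_one_le_of_injOn_extDisk hF hinj hz ((1 + Real.exp x) * a)
    rw [norm_one_add_mul ha (by positivity), add_sub_cancel_left] at hx
    rwa [norm_mul, norm_mul, ha, norm_real, Real.norm_of_nonneg (Real.exp_pos x).le, mul_one,
      add_zero]
  have hgronwall := norm_le_gronwallBound_of_norm_deriv_right_le (δ := ‖H (Real.log v)‖)
    (fun x _ => (hderiv x).continuousAt.continuousWithinAt)
    (fun x _ => (hderiv x).hasDerivWithinAt) le_rfl (fun x _ => hbound x) (Real.log u)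
    ⟨Real.log_le_log hv hvu, le_rfl⟩
  simp only [gronwallBound_ε0, hH, Real.exp_log hu, Real.exp_log hv] at hgronwall
  rwa [Real.rpow_def_of_pos (div_pos hu hv), Real.log_div hu.ne' hv.ne', mul_comm (Real.exp _),
    mul_comm (_ - _)]

end

lemma IsExtConformal.rho_le_rpow_mul_rho {Ω : Set ℂ} {Φ : ℂ → ℂ} (h : IsExtConformal Ω Φ)
    (hΩ : IsOpen Ω) (hcob : Ω ∈ cobounded ℂ) {z : ℂ} (hz : z ∉ Ω) {u v : ℝ} (hv : 0 < v)
    (hvu : v ≤ u) : rho Ω Φ u z ≤ (u / v) ^ (48 * Real.pi) * rho Ω Φ v z := by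
  have hu := hv.trans_le hvu
  obtain ⟨w, hw, hrho⟩ := h.exists_rho_eq hΩ hv z
  obtain ⟨a, ha, rfl⟩ : ∃ a : ℂ, ‖a‖ = 1 ∧ w = (1 + v) * a := by
    have hw0 : w ≠ 0 := norm_pos_iff.1 (by linarith)
    refine ⟨w / ‖w‖, by simp [hw0], ?_⟩
    rw [← ofReal_one, ← ofReal_add, ← hw, mul_div_cancel₀ _ (by simpa using hw0)]
  have huD := one_add_mul_mem_extDisk ha hu
  calc rho Ω Φ u z ≤ dist z (extInv Ω Φ ((1 + u) * a)) :=
        h.rho_le_dist hΩ hcob hu hz (h.extInv_mem huD)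
          (by rw [h.apply_extInv huD, norm_one_add_mul ha (by linarith)])
    _ ≤ (u / v) ^ (48 * Real.pi) * dist z (extInv Ω Φ ((1 + v) * a)) := by
        simp only [dist_comm z, dist_eq_norm]
        exact norm_sub_le_rpow_mul_of_injOn_extDisk (h.differentiableOn_extInv hΩ)
          h.injOn_extInv (fun w hw he => hz (by rw [← he]; exact h.extInv_mem hw)) ha hv hvu
    _ = (u / v) ^ (48 * Real.pi) * rho Ω Φ v z := by rw [hrho]

end Growth

section LengthArea

lemma setLIntegral_norm_deriv_sq_eq_volume_image {S : Set ℂ} {f f' : ℂ → ℂ}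
    (hS : MeasurableSet S) (hf : ∀ x ∈ S, HasDerivWithinAt f (f' x) S x) (hinj : InjOn f S) :
    ∫⁻ x in S, ENNReal.ofReal (‖f' x‖ ^ 2) = volume (f '' S) := by
  have hderiv : ∀ x ∈ S, HasFDerivWithinAt f
      ((ContinuousLinearMap.toSpanSingleton ℂ (f' x)).restrictScalars ℝ) S x := fun x hx =>
    (hf x hx).hasFDerivWithinAt.restrictScalars ℝ
  rw [← lintegral_abs_det_fderiv_eq_addHaar_image volume hS hderiv hinj]
  simp [ContinuousLinearMap.det, LinearMap.det_restrictScalars, Algebra.norm_complex_apply,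
    normSq_eq_norm_sq]

lemma sq_integral_le_mul_integral_sq {g : ℝ → ℝ} {a b : ℝ} (hab : a ≤ b)
    (hg : ContinuousOn g (uIcc a b)) :
    (∫ x in a..b, g x) ^ 2 ≤ (b - a) * ∫ x in a..b, g x ^ 2 := by
  have hquad : ∀ s : ℝ, 0 ≤ (b - a) * (s * s) + (-2 * ∫ x in a..b, g x) * s +
      ∫ x in a..b, g x ^ 2 := fun s => by
    have hexpand : ∫ x in a..b, (g x - s) ^ 2 =
        ∫ x in a..b, (s * s + (-2 * s * g x + g x ^ 2)) := by
      congr 1 with x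
      ring
    have hint : ∀ {k : ℝ → ℝ}, ContinuousOn k (uIcc a b) → IntervalIntegrable k volume a b :=
      ContinuousOn.intervalIntegrable
    rw [intervalIntegral.integral_add (hint (by fun_prop)) (hint (by fun_prop)),
      intervalIntegral.integral_add (hint (by fun_prop)) (hint (by fun_prop)),
      intervalIntegral.integral_const, intervalIntegral.integral_const_mul, smul_eq_mul] at hexpand
    have hnonneg : 0 ≤ ∫ x in a..b, (g x - s) ^ 2 :=
      intervalIntegral.integral_nonneg hab fun x _ => sq_nonneg _
    linarith
  have hdiscrim := discrim_le_zero hquad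
  rw [discrim] at hdiscrim
  linarith

lemma norm_sub_sq_le_mul_integral_norm_deriv_sq {E : Type*} [NormedAddCommGroup E]
    [NormedSpace ℝ E] [CompleteSpace E] {f f' : ℝ → E} {a b : ℝ} (hab : a ≤ b)
    (hf : ∀ x ∈ uIcc a b, HasDerivAt f (f' x) x) (hf' : ContinuousOn f' (uIcc a b)) :
    ‖f b - f a‖ ^ 2 ≤ (b - a) * ∫ x in a..b, ‖f' x‖ ^ 2 :=
  calc ‖f b - f a‖ ^ 2 = ‖∫ x in a..b, f' x‖ ^ 2 := by
        rw [intervalIntegral.integral_eq_sub_of_hasDerivAt hf hf'.intervalIntegrable]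
    _ ≤ (∫ x in a..b, ‖f' x‖) ^ 2 := by
        gcongr
        exact intervalIntegral.norm_integral_le_integral_norm hab
    _ ≤ _ := sq_integral_le_mul_integral_sq hab hf'.norm

lemma norm_sub_circleMap_sq_le {U : Set ℂ} {F : ℂ → ℂ} (hU : IsOpen U)
    (hF : DifferentiableOn ℂ F U) {c : ℂ} {t a b : ℝ} (hab : a ≤ b)
    (harc : circleMap c t '' uIcc a b ⊆ U) :
    ‖F (circleMap c t b) - F (circleMap c t a)‖ ^ 2 ≤
      (b - a) * (t ^ 2 * ∫ φ in a..b, ‖deriv F (circleMap c t φ)‖ ^ 2) := by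
  have hmaps := mapsTo_iff_image_subset.2 harc
  have hderiv : ∀ φ ∈ uIcc a b, HasDerivAt (fun φ => F (circleMap c t φ))
      (deriv F (circleMap c t φ) * (circleMap 0 t φ * I)) φ := fun φ hφ =>
    (hF.differentiableAt (hU.mem_nhds (hmaps hφ))).hasDerivAt.comp φ (hasDerivAt_circleMap c t φ)
  have hcont : ContinuousOn (fun φ => deriv F (circleMap c t φ) * (circleMap 0 t φ * I))
      (uIcc a b) :=
    ((hF.deriv hU).continuousOn.comp (continuous_circleMap c t).continuousOn hmaps).mul
      ((continuous_circleMap 0 t).mul continuous_const).continuousOn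
  refine (norm_sub_sq_le_mul_integral_norm_deriv_sq hab hderiv hcont).trans_eq ?_
  simp only [norm_mul, norm_circleMap_zero, norm_I, mul_one, mul_pow, sq_abs, mul_comm _ (t ^ 2),
    intervalIntegral.integral_const_mul]

section FirstExit

variable {X : Type*} [PseudoMetricSpace X] {f : ℝ → X} {a b d : ℝ}

lemma exists_first_exit (hab : a ≤ b) (hf : ContinuousOn f (Icc a b))
    (hd : d ≤ dist (f b) (f a)) :
    ∃ τ ∈ Icc a b, d ≤ dist (f τ) (f a) ∧ ∀ φ ∈ Ico a τ, dist (f φ) (f a) < d := by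
  have hcompact : IsCompact (Icc a b ∩ (fun φ => dist (f φ) (f a)) ⁻¹' Ici d) :=
    isCompact_Icc.of_isClosed_subset
      (ContinuousOn.preimage_isClosed_of_isClosed (by fun_prop) isClosed_Icc isClosed_Ici)
      inter_subset_left
  obtain ⟨τ, hτ, hmin⟩ := hcompact.exists_isLeast ⟨b, ⟨hab, le_rfl⟩, hd⟩
  refine ⟨τ, hτ.1, hτ.2, fun φ hφ => ?_⟩
  by_contra! h
  exact (hmin ⟨⟨hφ.1, hφ.2.le.trans hτ.1.2⟩, h⟩).not_gt hφ.2

lemma exists_Icc_subset_uIcc_of_le_dist (hf : ContinuousOn f (uIcc a b))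
    (hd : d ≤ dist (f b) (f a)) :
    ∃ σ τ, σ ≤ τ ∧ Icc σ τ ⊆ uIcc a b ∧ d ≤ dist (f τ) (f σ) ∧
      ∀ φ ∈ Ioo σ τ, dist (f φ) (f a) < d := by
  rcases le_total a b with hab | hab
  · rw [uIcc_of_le hab] at hf ⊢
    obtain ⟨τ, hτ, hdτ, hin⟩ := exists_first_exit hab hf hd
    exact ⟨a, τ, hτ.1, Icc_subset_Icc le_rfl hτ.2, hdτ, fun φ hφ => hin φ ⟨hφ.1.le, hφ.2⟩⟩
  · rw [uIcc_of_ge hab] at hf ⊢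
    obtain ⟨τ, hτ, hdτ, hin⟩ := exists_first_exit (f := fun x => f (-x)) (neg_le_neg hab)
      (hf.comp continuous_neg.continuousOn fun x hx => ⟨by linarith [hx.2], by linarith [hx.1]⟩)
      (by simpa only [neg_neg] using hd)
    rw [neg_neg] at hdτ hin
    refine ⟨-τ, a, by linarith [hτ.1], Icc_subset_Icc (by linarith [hτ.2]) le_rfl,
      by rwa [dist_comm], fun φ hφ => ?_⟩
    simpa only [neg_neg] using hin (-φ) ⟨by linarith [hφ.2], by linarith [hφ.1]⟩

end FirstExit

section Circles

variable {U : Set ℂ} {F : ℂ → ℂ} {c z : ℂ} {ρ d : ℝ}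

lemma exists_sq_div_le_integral_norm_deriv_circleMap_sq (hU : IsOpen U)
    (hF : DifferentiableOn ℂ F U) {t φ₁ φ₂ : ℝ} (hd : 0 ≤ d)
    (hφ₁ : φ₁ ∈ Icc (-Real.pi) Real.pi) (hφ₂ : φ₂ ∈ Icc (-Real.pi) Real.pi)
    (harc : circleMap c t '' uIcc φ₁ φ₂ ⊆ U)
    (hdist : d ≤ dist (F (circleMap c t φ₂)) (F (circleMap c t φ₁))) :
    ∃ σ τ, σ ≤ τ ∧ Icc σ τ ⊆ uIcc φ₁ φ₂ ∧
      d ^ 2 / (2 * Real.pi) ≤ t ^ 2 * ∫ φ in σ..τ, ‖deriv F (circleMap c t φ)‖ ^ 2 ∧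
      ∀ φ ∈ Ioo σ τ, dist (F (circleMap c t φ)) (F (circleMap c t φ₁)) < d := by
  have hmaps := mapsTo_iff_image_subset.2 harc
  obtain ⟨σ, τ, hστ, hsub, hdτ, hin⟩ := exists_Icc_subset_uIcc_of_le_dist
    (hF.continuousOn.comp (continuous_circleMap c t).continuousOn hmaps) hdist
  have hσ := uIcc_subset_Icc hφ₁ hφ₂ (hsub (left_mem_Icc.2 hστ))
  have hτ := uIcc_subset_Icc hφ₁ hφ₂ (hsub (right_mem_Icc.2 hστ))
  refine ⟨σ, τ, hστ, hsub, ?_, hin⟩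
  have hint : 0 ≤ ∫ φ in σ..τ, ‖deriv F (circleMap c t φ)‖ ^ 2 :=
    intervalIntegral.integral_nonneg hστ fun _ _ => by positivity
  rw [div_le_iff₀' Real.two_pi_pos]
  calc d ^ 2 ≤ ‖F (circleMap c t τ) - F (circleMap c t σ)‖ ^ 2 := by
        rw [← dist_eq_norm]
        gcongr
        exact hdτ
    _ ≤ (τ - σ) * (t ^ 2 * ∫ φ in σ..τ, ‖deriv F (circleMap c t φ)‖ ^ 2) :=
        norm_sub_circleMap_sq_le hU hF hστ ((image_mono (uIcc_of_le hστ ▸ hsub)).trans harc)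
    _ ≤ 2 * Real.pi * (t ^ 2 * ∫ φ in σ..τ, ‖deriv F (circleMap c t φ)‖ ^ 2) := by
        gcongr
        linarith [hσ.1, hτ.2]

lemma ofReal_sq_div_le_lintegral_circleMap (hU : IsOpen U) (hF : DifferentiableOn ℂ F U)
    {t φ₁ φ₂ : ℝ} (ht : 0 < t) (hd : 0 ≤ d) (hφ₁ : φ₁ ∈ Icc (-Real.pi) Real.pi)
    (hφ₂ : φ₂ ∈ Icc (-Real.pi) Real.pi) (harc : circleMap c t '' uIcc φ₁ φ₂ ⊆ U)
    (hz : F (circleMap c t φ₁) ∈ ball z ρ)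
    (hdist : d ≤ dist (F (circleMap c t φ₂)) (F (circleMap c t φ₁))) :
    ENNReal.ofReal (d ^ 2 / (2 * Real.pi) * t⁻¹) ≤ ∫⁻ φ in Ioo (-Real.pi) Real.pi,
      ENNReal.ofReal t * (U ∩ F ⁻¹' ball z (ρ + d)).indicator
        (fun w => ENNReal.ofReal (‖deriv F w‖ ^ 2)) (circleMap c t φ) := by
  have hmaps := mapsTo_iff_image_subset.2 harc
  obtain ⟨σ, τ, hστ, hsub, henergy, hin⟩ :=
    exists_sq_div_le_integral_norm_deriv_circleMap_sq hU hF hd hφ₁ hφ₂ harc hdist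
  have hσ := uIcc_subset_Icc hφ₁ hφ₂ (hsub (left_mem_Icc.2 hστ))
  have hτ := uIcc_subset_Icc hφ₁ hφ₂ (hsub (right_mem_Icc.2 hστ))
  have hcont : ContinuousOn (fun φ => t * ‖deriv F (circleMap c t φ)‖ ^ 2) (Icc σ τ) :=
    (((hF.deriv hU).continuousOn.comp (continuous_circleMap c t).continuousOn
      (hmaps.mono_left hsub)).norm.pow 2).const_mul t
  calc ENNReal.ofReal (d ^ 2 / (2 * Real.pi) * t⁻¹)
      ≤ ENNReal.ofReal (∫ φ in Ioo σ τ, t * ‖deriv F (circleMap c t φ)‖ ^ 2) := by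
        refine ENNReal.ofReal_le_ofReal ?_
        rw [← integral_Ioc_eq_integral_Ioo, ← intervalIntegral.integral_of_le hστ,
          intervalIntegral.integral_const_mul, ← div_eq_mul_inv, div_le_iff₀ ht]
        linarith
    _ = ∫⁻ φ in Ioo σ τ, ENNReal.ofReal t * ENNReal.ofReal (‖deriv F (circleMap c t φ)‖ ^ 2) := by
        rw [ofReal_integral_eq_lintegral_ofReal
          (hcont.integrableOn_Icc.mono_set Ioo_subset_Icc_self)
          (Eventually.of_forall fun φ => by positivity)]
        simp only [ENNReal.ofReal_mul ht.le]
    _ ≤ ∫⁻ φ in Ioo σ τ, ENNReal.ofReal t * (U ∩ F ⁻¹' ball z (ρ + d)).indicator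
          (fun w => ENNReal.ofReal (‖deriv F w‖ ^ 2)) (circleMap c t φ) := by
        refine setLIntegral_mono' measurableSet_Ioo fun φ hφ => ?_
        rw [indicator_of_mem]
        refine ⟨hmaps (hsub (Ioo_subset_Icc_self hφ)), mem_ball.2 ?_⟩
        exact (dist_triangle _ _ _).trans_lt
          (add_comm ρ d ▸ add_lt_add (hin φ hφ) (mem_ball.1 hz))
    _ ≤ _ := lintegral_mono_set (Ioo_subset_Ioo hσ.1 hτ.2)

lemma lintegral_eq_lintegral_circleMap (c : ℂ) {g : ℂ → ℝ≥0∞} (hg : Measurable g) :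
    ∫⁻ w, g w = ∫⁻ t in Ioi (0 : ℝ), ∫⁻ φ in Ioo (-Real.pi) Real.pi,
      ENNReal.ofReal t * g (circleMap c t φ) := by
  have hsymm : ∀ p : ℝ × ℝ, c + Complex.polarCoord.symm p = circleMap c p.1 p.2 := fun p => by
    rw [Complex.polarCoord_symm_apply, circleMap, exp_mul_I, ofReal_cos, ofReal_sin]
  have htarget : _root_.polarCoord.target = Ioi (0 : ℝ) ×ˢ Ioo (-Real.pi) Real.pi := rfl
  have hmeas : Measurable fun p : ℝ × ℝ => ENNReal.ofReal p.1 * g (circleMap c p.1 p.2) := by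
    unfold circleMap
    fun_prop
  rw [← lintegral_add_left_eq_self g c, ← Complex.lintegral_comp_polarCoord_symm]
  simp only [htarget, hsymm, smul_eq_mul]
  rw [Measure.volume_eq_prod, ← Measure.prod_restrict, lintegral_prod _ hmeas.aemeasurable]

lemma lintegral_norm_deriv_sq_preimage_ball_le (hU : IsOpen U) (hF : DifferentiableOn ℂ F U)
    (hinj : InjOn F U) (z : ℂ) {r : ℝ} (hr : 0 ≤ r) :
    ∫⁻ w in U ∩ F ⁻¹' ball z r, ENNReal.ofReal (‖deriv F w‖ ^ 2) ≤
      ENNReal.ofReal (Real.pi * r ^ 2) :=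
  calc ∫⁻ w in U ∩ F ⁻¹' ball z r, ENNReal.ofReal (‖deriv F w‖ ^ 2)
      = volume (F '' (U ∩ F ⁻¹' ball z r)) := setLIntegral_norm_deriv_sq_eq_volume_image
        (hF.continuousOn.isOpen_inter_preimage hU isOpen_ball).measurableSet
        (fun w hw => (hF.differentiableAt (hU.mem_nhds hw.1)).hasDerivAt.hasDerivWithinAt)
        (hinj.mono inter_subset_left)
    _ ≤ volume (ball z r) := measure_mono (image_subset_iff.2 inter_subset_right)
    _ = ENNReal.ofReal (Real.pi * r ^ 2) := by
        rw [Complex.volume_ball, mul_comm, ENNReal.ofReal_mul Real.pi_pos.le,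
          ENNReal.ofReal_pow hr, ← NNReal.coe_real_pi, ENNReal.ofReal_coe_nnreal]

theorem sq_div_mul_log_le_of_le_dist_circleMap (hU : IsOpen U) (hF : DifferentiableOn ℂ F U)
    (hinj : InjOn F U) {u v : ℝ} (hv : 0 < v) (hvu : v ≤ u) (hd : 0 ≤ d) (hρ : 0 ≤ ρ)
    (harc : ∀ t ∈ Ioo v u, ∃ φ₁ ∈ Icc (-Real.pi) Real.pi, ∃ φ₂ ∈ Icc (-Real.pi) Real.pi,
      circleMap c t '' uIcc φ₁ φ₂ ⊆ U ∧ F (circleMap c t φ₁) ∈ ball z ρ ∧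
        d ≤ dist (F (circleMap c t φ₂)) (F (circleMap c t φ₁))) :
    d ^ 2 / (2 * Real.pi) * Real.log (u / v) ≤ Real.pi * (ρ + d) ^ 2 := by
  set W := U ∩ F ⁻¹' ball z (ρ + d)
  have hW : MeasurableSet W :=
    (hF.continuousOn.isOpen_inter_preimage hU isOpen_ball).measurableSet
  set g : ℂ → ℝ≥0∞ := W.indicator fun w => ENNReal.ofReal (‖deriv F w‖ ^ 2)
  have hg : Measurable g :=
    (((measurable_deriv F).norm.pow_const 2).ennreal_ofReal).indicator hW
  have hint : ∫ t in Ioo v u, d ^ 2 / (2 * Real.pi) * t⁻¹ =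
      d ^ 2 / (2 * Real.pi) * Real.log (u / v) := by
    rw [← integral_Ioc_eq_integral_Ioo, ← intervalIntegral.integral_of_le hvu,
      intervalIntegral.integral_const_mul, integral_inv_of_pos hv (hv.trans_le hvu)]
  have hcont : ContinuousOn (fun t : ℝ => d ^ 2 / (2 * Real.pi) * t⁻¹) (Icc v u) :=
    continuousOn_const.mul (continuousOn_inv₀.mono fun t ht => (hv.trans_le ht.1).ne')
  refine (ENNReal.ofReal_le_ofReal_iff (by positivity)).1 ?_
  calc ENNReal.ofReal (d ^ 2 / (2 * Real.pi) * Real.log (u / v))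
      = ∫⁻ t in Ioo v u, ENNReal.ofReal (d ^ 2 / (2 * Real.pi) * t⁻¹) := by
        rw [← hint, ofReal_integral_eq_lintegral_ofReal
          (hcont.integrableOn_Icc.mono_set Ioo_subset_Icc_self)]
        filter_upwards [ae_restrict_mem measurableSet_Ioo] with t ht
        have := hv.trans ht.1
        positivity
    _ ≤ ∫⁻ t in Ioo v u, ∫⁻ φ in Ioo (-Real.pi) Real.pi,
          ENNReal.ofReal t * g (circleMap c t φ) := by
        refine setLIntegral_mono' measurableSet_Ioo fun t ht => ?_
        obtain ⟨φ₁, hφ₁, φ₂, hφ₂, hsub, hz, hdist⟩ := harc t ht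
        exact ofReal_sq_div_le_lintegral_circleMap hU hF (hv.trans ht.1) hd hφ₁ hφ₂ hsub hz hdist
    _ ≤ ∫⁻ t in Ioi (0 : ℝ), ∫⁻ φ in Ioo (-Real.pi) Real.pi,
          ENNReal.ofReal t * g (circleMap c t φ) :=
        lintegral_mono_set fun t ht => hv.trans ht.1
    _ = ∫⁻ w in W, ENNReal.ofReal (‖deriv F w‖ ^ 2) := by
        rw [← lintegral_eq_lintegral_circleMap c hg, lintegral_indicator hW]
    _ ≤ ENNReal.ofReal (Real.pi * (ρ + d) ^ 2) :=
        lintegral_norm_deriv_sq_preimage_ball_le hU hF hinj z (by positivity)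

end Circles

lemma circleMap_one_mem_extDisk_iff {t φ : ℝ} (ht : 0 < t) :
    circleMap 1 t φ ∈ extDisk ↔ -(t / 2) < Real.cos φ := by
  have hnorm : ‖circleMap 1 t φ‖ ^ 2 = 1 + t * (2 * Real.cos φ + t) := by
    rw [circleMap, ← normSq_eq_norm_sq, normSq_apply]
    simp [exp_ofReal_mul_I_re, exp_ofReal_mul_I_im]
    linear_combination t ^ 2 * Real.sin_sq_add_cos_sq φ
  change 1 < ‖circleMap 1 t φ‖ ↔ _
  rw [← one_lt_sq_iff₀ (norm_nonneg _), hnorm, lt_add_iff_pos_right,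
    mul_pos_iff_of_pos_left ht]
  constructor <;> intro h <;> linarith

lemma image_circleMap_one_uIcc_subset_extDisk {t a b : ℝ} (ht : 0 < t) (ha : |a| ≤ Real.pi)
    (hb : |b| ≤ Real.pi) (hta : circleMap 1 t a ∈ extDisk) (htb : circleMap 1 t b ∈ extDisk) :
    circleMap 1 t '' uIcc a b ⊆ extDisk := by
  rintro _ ⟨φ, hφ, rfl⟩
  rw [circleMap_one_mem_extDisk_iff ht] at *
  have hle : |φ| ≤ |a| ∨ |φ| ≤ |b| := by
    rw [← le_max_iff]
    rcases mem_uIcc.1 hφ with h | h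
    · exact abs_le_max_abs_abs h.1 h.2
    · rw [max_comm]
      exact abs_le_max_abs_abs h.1 h.2
  rw [← Real.cos_abs] at *
  rcases hle with h | h
  · exact hta.trans_le (Real.cos_le_cos_of_nonneg_of_le_pi (abs_nonneg _) ha h)
  · exact htb.trans_le (Real.cos_le_cos_of_nonneg_of_le_pi (abs_nonneg _) hb h)

end LengthArea

section LowerBound

lemma exists_circleMap_one_eq {a w : ℂ} {t : ℝ} (ha : ‖a‖ = 1) (hw : dist w a = t) :
    ∃ φ, |φ| ≤ Real.pi ∧ a * circleMap 1 t φ = w := by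
  have ha0 : a ≠ 0 := norm_ne_zero_iff.1 (ha ▸ one_ne_zero)
  have hnorm : ‖w / a - 1‖ = t := by
    rw [← div_self ha0, ← sub_div, norm_div, ha, div_one, ← dist_eq_norm, hw]
  refine ⟨arg (w / a - 1), abs_arg_le_pi _, ?_⟩
  rw [circleMap, ← hnorm, norm_mul_exp_arg_mul_I, add_sub_cancel, mul_div_cancel₀ _ ha0]

lemma IsExtConformal.sq_div_mul_log_le {Ω : Set ℂ} {Φ : ℂ → ℂ} (h : IsExtConformal Ω Φ)
    (hΩ : IsOpen Ω) {a z : ℂ} (ha : ‖a‖ = 1) {u v ρ d : ℝ} (hv : 0 < v) (hvu : v ≤ u)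
    (hd : 0 ≤ d) (hρ : 0 ≤ ρ)
    (hcross : ∀ t ∈ Ioo v u, ∃ p ∈ Ω, ∃ q ∈ Ω, dist (Φ p) a = t ∧ dist (Φ q) a = t ∧
      dist p z < ρ ∧ d ≤ dist q p) :
    d ^ 2 / (2 * Real.pi) * Real.log (u / v) ≤ Real.pi * (ρ + d) ^ 2 := by
  have hrot : MapsTo (a * ·) extDisk extDisk := fun w hw => by
    change 1 < ‖a * w‖
    rwa [norm_mul, ha, one_mul]
  have hrot' : ∀ {w : ℂ}, a * w ∈ extDisk → w ∈ extDisk := fun {w} hw => by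
    change 1 < ‖a * w‖ at hw
    rwa [norm_mul, ha, one_mul] at hw
  have ha0 : a ≠ 0 := norm_ne_zero_iff.1 (ha ▸ one_ne_zero)
  refine sq_div_mul_log_le_of_le_dist_circleMap (F := fun w => extInv Ω Φ (a * w)) (c := 1) (z := z)
    isOpen_extDisk ((h.differentiableOn_extInv hΩ).comp (by fun_prop) hrot)
    (h.injOn_extInv.comp (mul_right_injective₀ ha0).injOn hrot) hv hvu hd hρ fun t ht => ?_
  obtain ⟨p, hp, q, hq, hpt, hqt, hpz, hpq⟩ := hcross t ht
  obtain ⟨φ₁, hφ₁, hp'⟩ := exists_circleMap_one_eq ha hpt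
  obtain ⟨φ₂, hφ₂, hq'⟩ := exists_circleMap_one_eq ha hqt
  refine ⟨φ₁, abs_le.1 hφ₁, φ₂, abs_le.1 hφ₂, ?_, ?_, ?_⟩
  · exact image_circleMap_one_uIcc_subset_extDisk (hv.trans ht.1) hφ₁ hφ₂
      (hrot' (hp' ▸ h.2.1.mapsTo hp)) (hrot' (hq' ▸ h.2.1.mapsTo hq))
  · simpa only [hp', h.extInv_apply hp] using mem_ball.2 hpz
  · simpa only [hp', hq', h.extInv_apply hp, h.extInv_apply hq] using hpq

namespace IsExtConformal

variable {Γ : Set ℂ} {Φ : ℂ → ℂ} (h : IsExtConformal (unboundedComponent Γ) Φ)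
include h

lemma mem_connectedComponentIn (hΓ : IsClosed Γ) {a b : ℂ} (ha : a ∈ unboundedComponent Γ)
    (hb : b ∈ unboundedComponent Γ) : b ∈ connectedComponentIn Γᶜ a :=
  (h.isPreconnected (isOpen_unboundedComponent hΓ)).subset_connectedComponentIn ha
    (fun _ hz => hz.1) hb

lemma exists_dist_eq {S : Set ℂ} (hS : S ⊆ Γᶜ) {a b c : ℂ} {t : ℝ}
    (ha : a ∈ unboundedComponent Γ) (hab : b ∈ connectedComponentIn S a)
    (hat : dist (Φ a) c ≤ t) (hbt : t ≤ dist (Φ b) c) :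
    ∃ p ∈ unboundedComponent Γ, p ∈ S ∧ dist (Φ p) c = t := by
  have haS : a ∈ connectedComponentIn S a :=
    _root_.mem_connectedComponentIn (connectedComponentIn_nonempty_iff.1 ⟨b, hab⟩)
  have hsub := subset_unboundedComponent isPreconnected_connectedComponentIn
    ((connectedComponentIn_subset S a).trans hS) haS ha
  obtain ⟨p, hp, hpt⟩ := isPreconnected_connectedComponentIn.intermediate_value haS hab
    (ContinuousOn.mono (f := fun z => dist (Φ z) c)
      (continuous_id.dist continuous_const |>.comp_continuousOn h.1.continuousOn) hsub) ⟨hat, hbt⟩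
  exact ⟨p, hsub hp, connectedComponentIn_subset S a hp, hpt⟩

lemma exists_mem_ball_dist_eq {K : ℝ} (hΓ : IsJordanCurve Γ) (hK : IsBoundedTurning Γ K)
    {a b c x : ℂ} {R C t : ℝ} (ha : a ∈ unboundedComponent Γ) (hb : b ∈ unboundedComponent Γ)
    (haR : dist a x ≤ R) (hbR : dist b x ≤ R) (hRC : (2 * K + 1) * R < C)
    (hat : dist (Φ a) c ≤ t) (hbt : t ≤ dist (Φ b) c) :
    ∃ p ∈ unboundedComponent Γ, dist p x < C ∧ dist (Φ p) c = t := by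
  obtain ⟨p, hp, hpS, hpt⟩ := h.exists_dist_eq inter_subset_left ha
    (hΓ.mem_connectedComponentIn_inter_ball hK
      (h.mem_connectedComponentIn hΓ.isCompact.isClosed ha hb) haR hbR hRC) hat hbt
  exact ⟨p, hp, hpS.2, hpt⟩

lemma exists_notMem_closedBall_dist_eq {K : ℝ} (hΓ : IsCompact Γ) (hK : IsBoundedTurning Γ K)
    (hK0 : 0 ≤ K) {a c x : ℂ} {R t : ℝ} (ha : a ∈ unboundedComponent Γ)
    (haR : (2 * K + 1) * R < dist a x) (hat : dist (Φ a) c ≤ t) :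
    ∃ p ∈ unboundedComponent Γ, R < dist p x ∧ dist (Φ p) c = t := by
  obtain ⟨b, ⟨hbR, hb⟩, hbt⟩ : ∃ b, ((2 * K + 1) * R < dist b x ∧ b ∈ unboundedComponent Γ) ∧
      t ≤ dist (Φ b) c :=
    (((tendsto_dist_right_cobounded_atTop x).eventually_gt_atTop _ |>.and
      (unboundedComponent_mem_cobounded hΓ.isBounded)).and
      (((tendsto_dist_right_cobounded_atTop c).comp
        (tendsto_norm_atTop_iff_cobounded.1 h.tendsto_norm)).eventually_ge_atTop t)).exists
  obtain ⟨p, hp, hpS, hpt⟩ := h.exists_dist_eq (compl_subset_compl.2 subset_union_left) ha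
    (hK.mem_connectedComponentIn_diff_closedBall hΓ hK0
      (h.mem_connectedComponentIn hΓ.isClosed ha hb) haR hbR) hat hbt
  exact ⟨p, hp, not_le.1 fun hle => hpS (Or.inr hle), hpt⟩

lemma exists_near_far (hΓ : IsJordanCurve Γ) {z : ℂ} (hz : z ∈ Γ) {v ε : ℝ} (hv : 0 < v)
    (hε : 0 < ε) :
    ∃ a : ℂ, ‖a‖ = 1 ∧
      (∃ x ∈ unboundedComponent Γ, dist x z < ε ∧ dist (Φ x) a ≤ v) ∧
      ∃ y ∈ unboundedComponent Γ, rho (unboundedComponent Γ) Φ v z ≤ dist y z ∧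
        dist (Φ y) a ≤ v := by
  have hΩ := isOpen_unboundedComponent hΓ.isCompact.isClosed
  have hcob := unboundedComponent_mem_cobounded hΓ.isCompact.isBounded
  have hzΩ : z ∉ unboundedComponent Γ := fun hx => hx.1 hz
  have hr := h.rho_pos hΩ hv hzΩ
  obtain ⟨x, hx, hxz⟩ := Metric.mem_closure_iff.1
    (hΓ.subset_closure_unboundedComponent (Filter.nonempty_of_mem hcob) hz) _ (lt_min hε hr)
  obtain ⟨hxε, hxr⟩ := lt_min_iff.1 hxz
  have hxv : ‖Φ x‖ < 1 + v := lt_of_not_ge fun hge =>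
    (h.rho_le_dist hΩ hcob hv hzΩ hx hge).not_gt hxr
  have hx1 : 1 < ‖Φ x‖ := h.2.1.mapsTo hx
  have hx0 : (‖Φ x‖ : ℂ) ≠ 0 := ofReal_ne_zero.2 (by linarith)
  set a := Φ x / ‖Φ x‖ with hadef
  have ha : ‖a‖ = 1 := by
    rw [norm_div, norm_real, norm_norm, div_self (by linarith)]
  have hbD := one_add_mul_mem_extDisk ha hv
  refine ⟨a, ha, ⟨x, hx, dist_comm x z ▸ hxε, ?_⟩,
    extInv (unboundedComponent Γ) Φ ((1 + v) * a), h.extInv_mem hbD, ?_, ?_⟩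
  · have hsub : Φ x - a = ((‖Φ x‖ - 1 : ℝ) : ℂ) * a := by
      rw [hadef, ofReal_sub, ofReal_one, sub_mul, mul_div_cancel₀ _ hx0, one_mul]
    rw [dist_eq_norm, hsub, norm_mul, ha, norm_real, Real.norm_of_nonneg (by linarith)]
    linarith
  · rw [dist_comm]
    exact h.rho_le_dist hΩ hcob hv hzΩ (h.extInv_mem hbD)
      (by rw [h.apply_extInv hbD, norm_one_add_mul ha (by linarith)])
  · rw [h.apply_extInv hbD, dist_eq_norm, add_mul, one_mul, add_sub_cancel_left, norm_mul, ha,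
      norm_real, Real.norm_of_nonneg hv.le, mul_one]

end IsExtConformal

section BoundedTurning

variable {Γ : Set ℂ} {K : ℝ} {Φ : ℂ → ℂ} (hΓ : IsJordanCurve Γ) (hK : IsBoundedTurning Γ K)
  (h : IsExtConformal (unboundedComponent Γ) Φ)
include hΓ hK h

lemma exists_crossings_of_rho_lt {z : ℂ} (hz : z ∈ Γ) {u v : ℝ} (hv : 0 < v) (hvu : v ≤ u)
    (hlt : rho (unboundedComponent Γ) Φ u z < 2 * rho (unboundedComponent Γ) Φ v z) :
    ∃ a : ℂ, ‖a‖ = 1 ∧ ∀ t ∈ Ioo v u, ∃ p ∈ unboundedComponent Γ, ∃ q ∈ unboundedComponent Γ,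
      dist (Φ p) a = t ∧ dist (Φ q) a = t ∧
      dist p z < (2 * K + 2) * (2 * rho (unboundedComponent Γ) Φ v z) ∧
      rho (unboundedComponent Γ) Φ v z / (4 * (2 * K + 2)) ≤ dist q p := by
  have hΩ := isOpen_unboundedComponent hΓ.isCompact.isClosed
  have hK0 : 0 ≤ K := zero_le_one.trans (hK.one_le hΓ.nontrivial)
  have hr := h.rho_pos hΩ hv fun hx : z ∈ unboundedComponent Γ => hx.1 hz
  set r := rho (unboundedComponent Γ) Φ v z
  obtain ⟨w, hw, hwz⟩ := h.exists_rho_eq hΩ (hv.trans_le hvu) z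
  have hwD : w ∈ extDisk := (lt_add_of_pos_right 1 (hv.trans_le hvu)).trans_eq hw.symm
  obtain ⟨a, ha, ⟨x, hx, hxz, hxa⟩, y, hy, hyz, hya⟩ := h.exists_near_far hΓ hz hv (half_pos hr)
  refine ⟨a, ha, fun t ht => ?_⟩
  have hwt : t ≤ dist (Φ (extInv (unboundedComponent Γ) Φ w)) a := by
    rw [h.apply_extInv hwD, dist_eq_norm]
    linarith [norm_sub_norm_le w a, ht.2]
  obtain ⟨p, hp, hpz, hpt⟩ := h.exists_mem_ball_dist_eq hΓ hK (x := z) (R := 2 * r)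
    (C := (2 * K + 2) * (2 * r)) hx (h.extInv_mem hwD) (by linarith)
    (by rw [dist_comm, ← hwz]; exact hlt.le) (by linarith) (hxa.trans ht.1.le) hwt
  obtain ⟨s, hs, hsp, hsa⟩ : ∃ s ∈ unboundedComponent Γ, r / 4 ≤ dist s p ∧ dist (Φ s) a ≤ v := by
    by_contra! hclose
    have hxp : dist x p < r / 4 := lt_of_not_ge fun hge => (hclose x hx hge).not_ge hxa
    have hyp : dist y p < r / 4 := lt_of_not_ge fun hge => (hclose y hy hge).not_ge hya
    linarith [dist_triangle y p z, dist_triangle_left p z x]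
  have hfar : (2 * K + 1) * (r / (4 * (2 * K + 2))) < dist s p := by
    refine lt_of_lt_of_le ?_ hsp
    rw [mul_div_assoc', div_lt_div_iff₀ (by positivity) four_pos]
    nlinarith
  obtain ⟨q, hq, hqp, hqt⟩ := h.exists_notMem_closedBall_dist_eq hΓ.isCompact hK hK0 hs hfar
    (hsa.trans ht.1.le)
  exact ⟨p, hp, q, hq, hpt, hqt, hpz, hqp.le⟩

lemma two_mul_rho_le_rho {z : ℂ} (hz : z ∈ Γ) {u v : ℝ} (hv : 0 < v) (hvu : v ≤ u)
    (hlog : 2 * Real.pi ^ 2 * (8 * (2 * K + 2) ^ 2 + 1) ^ 2 < Real.log (u / v)) :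
    2 * rho (unboundedComponent Γ) Φ v z ≤ rho (unboundedComponent Γ) Φ u z := by
  by_contra! hlt
  have hΩ := isOpen_unboundedComponent hΓ.isCompact.isClosed
  have hC : 0 < 2 * K + 2 := by linarith [hK.one_le hΓ.nontrivial]
  have hr := h.rho_pos hΩ hv fun hx : z ∈ unboundedComponent Γ => hx.1 hz
  obtain ⟨a, ha, hcross⟩ := exists_crossings_of_rho_lt hΓ hK h hz hv hvu hlt
  have hlength := h.sq_div_mul_log_le hΩ ha hv hvu (by positivity) (by positivity) hcross
  set C := 2 * K + 2
  set r := rho (unboundedComponent Γ) Φ v z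
  refine hlog.not_ge ?_
  calc Real.log (u / v)
      = 2 * Real.pi / (r / (4 * C)) ^ 2 *
          ((r / (4 * C)) ^ 2 / (2 * Real.pi) * Real.log (u / v)) := by field_simp
    _ ≤ 2 * Real.pi / (r / (4 * C)) ^ 2 * (Real.pi * (C * (2 * r) + r / (4 * C)) ^ 2) := by gcongr
    _ = 2 * Real.pi ^ 2 * (8 * C ^ 2 + 1) ^ 2 := by field_simp; ring

end BoundedTurning

section Doubling

variable {f : ℝ → ℝ} {u v : ℝ}

lemma two_pow_mul_le_of_doubling {A : ℝ} (hA : 0 < A) (hf : ∀ s, 0 < s → 2 * f s ≤ f (A * s))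
    (hv : 0 < v) (n : ℕ) : 2 ^ n * f v ≤ f (A ^ n * v) := by
  induction n with
  | zero => simp
  | succ n ih =>
    calc 2 ^ (n + 1) * f v = 2 * (2 ^ n * f v) := by ring
      _ ≤ 2 * f (A ^ n * v) := by gcongr
      _ ≤ f (A * (A ^ n * v)) := hf _ (by positivity)
      _ = f (A ^ (n + 1) * v) := by rw [pow_succ', mul_assoc]

lemma half_mul_rpow_mul_le_of_doubling {N : ℝ} (hN : 0 < N) (hmono : MonotoneOn f (Ioi 0))
    (hf : ∀ s, 0 < s → 2 * f s ≤ f (Real.exp N * s)) (hv : 0 < v) (hvu : v ≤ u)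
    (hfv : 0 ≤ f v) : 1 / 2 * (u / v) ^ (Real.log 2 / N) * f v ≤ f u := by
  have hu : 0 < u := hv.trans_le hvu
  have huv : 0 < u / v := div_pos hu hv
  have hlog : 0 ≤ Real.log (u / v) := Real.log_nonneg ((one_le_div hv).2 hvu)
  set n := ⌊Real.log (u / v) / N⌋₊
  have hle : Real.exp N ^ n * v ≤ u := by
    rw [← le_div_iff₀ hv, ← Real.exp_nat_mul, ← Real.le_log_iff_exp_le huv, ← le_div_iff₀ hN]
    exact Nat.floor_le (div_nonneg hlog hN.le)
  have hpow : (u / v) ^ (Real.log 2 / N) ≤ 2 ^ (n + 1) := by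
    rw [Real.rpow_def_of_pos huv, ← Real.rpow_natCast, Real.rpow_def_of_pos two_pos]
    refine Real.exp_le_exp.2 ?_
    calc Real.log (u / v) * (Real.log 2 / N) = Real.log 2 * (Real.log (u / v) / N) := by ring
      _ ≤ Real.log 2 * (n + 1 : ℕ) := by
        gcongr
        exact_mod_cast (Nat.lt_floor_add_one _).le
  calc 1 / 2 * (u / v) ^ (Real.log 2 / N) * f v ≤ 1 / 2 * 2 ^ (n + 1) * f v := by gcongr
    _ = 2 ^ n * f v := by ring
    _ ≤ f (Real.exp N ^ n * v) := two_pow_mul_le_of_doubling (Real.exp_pos N) hf hv n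
    _ ≤ f u := hmono (mem_Ioi.2 (by positivity)) hu hle

end Doubling

lemma exists_rho_ratio_lower_bound (K : ℝ) : ∃ β : ℝ, 0 < β ∧ ∀ Γ : Set ℂ, IsJordanCurve Γ →
    IsBoundedTurning Γ K → ∀ Φ : ℂ → ℂ, IsExtConformal (unboundedComponent Γ) Φ →
    ∀ (u v : ℝ) (z : ℂ), 0 < v → v ≤ u → z ∈ Γ →
    1 / 2 * (u / v) ^ β * rho (unboundedComponent Γ) Φ v z ≤ rho (unboundedComponent Γ) Φ u z := by
  set N := 2 * Real.pi ^ 2 * (8 * (2 * K + 2) ^ 2 + 1) ^ 2 + 1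
  have hN : 0 < N := by positivity
  refine ⟨Real.log 2 / N, div_pos (Real.log_pos one_lt_two) hN,
    fun Γ hΓ hK Φ h u v z hv hvu hz => ?_⟩
  have hzΩ : z ∉ unboundedComponent Γ := fun hx => hx.1 hz
  have hΩ := isOpen_unboundedComponent hΓ.isCompact.isClosed
  have hcob := unboundedComponent_mem_cobounded hΓ.isCompact.isBounded
  refine half_mul_rpow_mul_le_of_doubling (f := fun s => rho (unboundedComponent Γ) Φ s z) hN
    (fun s hs t _ hst => h.rho_mono hΩ hcob hs hst hzΩ) (fun s hs => ?_) hv hvu infDist_nonneg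
  refine two_mul_rho_le_rho hΓ hK h hz hs
    (le_mul_of_one_le_left hs.le (Real.one_le_exp hN.le)) ?_
  rw [mul_div_cancel_right₀ _ hs.ne', Real.log_exp]
  exact lt_add_one _

end LowerBound

theorem rho_ratio_bounds_general (K : ℝ) :
    ∃ α : ℝ, ∃ c : ℝ, 1 ≤ α ∧ 0 < c ∧ ∀ Γ : Set ℂ, IsJordanCurve Γ → IsBoundedTurning Γ K →
      ∀ Φ : ℂ → ℂ, IsExtConformal (unboundedComponent Γ) Φ → ∀ (u v : ℝ) (z : ℂ),
      0 < v → v < u → z ∈ Γ →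
      (1/c) * (u/v) ^ (1/α) ≤
          rho (unboundedComponent Γ) Φ u z / rho (unboundedComponent Γ) Φ v z ∧
        rho (unboundedComponent Γ) Φ u z / rho (unboundedComponent Γ) Φ v z ≤
          c * (u/v) ^ α := by
  obtain ⟨β, hβ, hlower⟩ := exists_rho_ratio_lower_bound K
  have hα : 1 ≤ max (48 * Real.pi) (1 / β) := le_max_of_le_left (by linarith [Real.pi_gt_three])
  refine ⟨max (48 * Real.pi) (1 / β), 2, hα, two_pos, fun Γ hΓ hK Φ h u v z hv hvu hz => ?_⟩
  have hΩ := isOpen_unboundedComponent hΓ.isCompact.isClosed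
  have hcob := unboundedComponent_mem_cobounded hΓ.isCompact.isBounded
  have hzΩ : z ∉ unboundedComponent Γ := fun hx => hx.1 hz
  have hρ := h.rho_pos hΩ hv hzΩ
  have huv : 1 ≤ u / v := (one_le_div hv).2 hvu.le
  rw [le_div_iff₀ hρ, div_le_iff₀ hρ]
  constructor
  · refine le_trans ?_ (hlower Γ hΓ hK Φ h u v z hv hvu.le hz)
    gcongr
    exact (one_div_le (by positivity) hβ).2 (le_max_right _ _)
  · refine (h.rho_le_rpow_mul_rho hΩ hcob hzΩ hv hvu.le).trans ?_
    gcongr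
    calc (u / v) ^ (48 * Real.pi)
        ≤ (u / v) ^ max (48 * Real.pi) (1 / β) := by gcongr; exact le_max_left _ _
      _ ≤ 2 * (u / v) ^ max (48 * Real.pi) (1 / β) :=
        le_mul_of_one_le_left (by positivity) one_le_two

/-- (3.9n): there exist `α = α(Γ) ≥ 1` and `c = c(Γ) > 0` such that for
`0 < v < u ≤ 1` and `z ∈ Γ`, `(1/c)(u/v)^{1/α} ≤ ρ_u(z)/ρ_v(z) ≤ c (u/v)^{α}`. -/
theorem rho_ratio_bounds
    (Γ : Set ℂ) (Λ : ℝ) (hΓJ : IsJordanCurve Γ) (hΓq : IsQuasismooth Γ Λ)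
    (Φ : ℂ → ℂ) (hΦ : IsExtConformal (unboundedComponent Γ) Φ) :
    ∃ α : ℝ, ∃ c : ℝ, 1 ≤ α ∧ 0 < c ∧ ∀ (u v : ℝ) (z : ℂ),
      0 < v → v < u → u ≤ 1 → z ∈ Γ →
      (1/c) * (u/v) ^ (1/α) ≤
          rho (unboundedComponent Γ) Φ u z / rho (unboundedComponent Γ) Φ v z ∧
        rho (unboundedComponent Γ) Φ u z / rho (unboundedComponent Γ) Φ v z ≤
          c * (u/v) ^ α := by
  obtain ⟨α, c, hα, hc, hbounds⟩ := rho_ratio_bounds_general (2 * Λ)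
  exact ⟨α, c, hα, hc, fun u v z hv hvu _ hz =>
    hbounds Γ hΓJ hΓq.isBoundedTurning Φ hΦ u v z hv hvu hz⟩
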